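/- arXiv:1104.3543 — 2 statements merged into one kernel-verified Lean document; each statement's English description precedes it below -/
import Mathlib

section
/- Suppose (x_n) ⊆ W is a normalised block sequence, β < ω₁, and for every normalised block sequence (y_n) in X = [x_n] and every K ≥ 1, player I has a strategy in F^β_X to play outcomes (z_0,…,z_k) satisfying (z_0,…,z_k) ≁_K (y_0,…,y_k). Then for every normalised block sequence (y_n) in X there is a sequence I_0 < I_1 < I_2 < … of finite intervals of ℕ such that whenever A ⊆ ℕ is infinite and Z = [x_j : j ∉ ⋃_{m∈A} I_m], then Emb((y_n),Z) ≤ β. -/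
open Filter Topology

namespace Rosendal

variable {𝒲 : Type} [NormedAddCommGroup 𝒲] [NormedSpace ℝ 𝒲]

/-- `(e n)` is a Schauder basis of the Banach space `𝒲`. -/
def IsSchauderBasis (e : ℕ → 𝒲) : Prop :=
  ∀ x : 𝒲, ∃! a : ℕ → ℝ,
    Tendsto (fun N => ∑ i ∈ Finset.range N, a i • e i) atTop (𝓝 x)

/-- `x` is a linear combination of the vectors `b i`, `i ∈ s`. -/
def SuppIn (b : ℕ → 𝒲) (x : 𝒲) (s : Finset ℕ) : Prop :=
  ∃ a : ℕ → ℝ, x = ∑ i ∈ s, a i • b i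

/-- `(x i)_{i<k} ∼_K (y i)_{i<k}`. -/
def SeqEquiv (K : ℝ) (k : ℕ) (x y : ℕ → 𝒲) : Prop :=
  ∀ a : ℕ → ℝ,
    (1 / K) * ‖∑ i ∈ Finset.range k, a i • x i‖ ≤ ‖∑ i ∈ Finset.range k, a i • y i‖ ∧
    ‖∑ i ∈ Finset.range k, a i • y i‖ ≤ K * ‖∑ i ∈ Finset.range k, a i • x i‖

/-- The outcome `l = (x 0, …, x k)` satisfies `(x 0, …, x k) ∼_K (y 0, …, y k)`. -/
def OutcomeEquiv (K : ℝ) (l : List 𝒲) (y : ℕ → 𝒲) : Prop :=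
  SeqEquiv K l.length (fun i => l.getD i 0) y

/-- The outcome `l = (u 0, v 0, u 1, v 1, …, u k, v k)` satisfies
`(u 0, …, u k) ∼_K (v 0, …, v k)`. -/
def PairOutcomeEquiv (K : ℝ) (l : List 𝒲) : Prop :=
  SeqEquiv K (l.length / 2) (fun i => l.getD (2 * i) 0) (fun i => l.getD (2 * i + 1) 0)

/-- The tree `T((x n), Y, K)`. -/
def embTree (x : ℕ → 𝒲) (Y : Set 𝒲) (K : ℝ) : Set (List 𝒲) :=
  {l | (∀ v ∈ l, v ∈ Y) ∧ SeqEquiv K l.length (fun i => l.getD i 0) x}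

open Classical in
/-- The rank of a tree of finite sequences; `⊤ = ∞` if it is ill-founded. -/
noncomputable def treeRank (T : Set (List 𝒲)) : WithTop Ordinal :=
  if h : WellFounded (fun t s : T => s.val <+: t.val ∧ s.val ≠ t.val) then
    ((⨆ s : T, Order.succ ((h.apply s).rank) : Ordinal) : WithTop Ordinal)
  else ⊤

open Classical in
/-- The embeddability index `Emb((x n), Y) = sup_{K ≥ 1} rank T((x n), Y, K)`. -/
noncomputable def embIndex (x : ℕ → 𝒲) (Y : Set 𝒲) : WithTop Ordinal :=
  if ∃ K : ℝ, 1 ≤ K ∧ treeRank (embTree x Y K) = ⊤ then ⊤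
  else ((sSup {o : Ordinal | ∃ K : ℝ, 1 ≤ K ∧
      (o : WithTop Ordinal) = treeRank (embTree x Y K)} : Ordinal) : WithTop Ordinal)

/-- `(I m)` is a sequence of successive nonempty finite intervals `I 0 < I 1 < …` of `ℕ`. -/
def IntervalSeq (I : ℕ → Finset ℕ) : Prop :=
  (∀ m, ∃ a b : ℕ, a ≤ b ∧ I m = Finset.Icc a b) ∧
  ∀ m, ∀ i ∈ I m, ∀ j ∈ I (m + 1), i < j

/-- The setting of Section 2 of the paper: a Banach space `𝒲` with a Schauder basis
`(e n)`, a countable subfield `𝔽 ⊆ ℝ` closed under the norms of finite `𝔽`-linear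
combinations of the basis, and the countable `𝔽`-vector space `W` spanned by `(e n)`. -/
structure Frame (𝒲 : Type) [NormedAddCommGroup 𝒲] [NormedSpace ℝ 𝒲] : Type where
  e : ℕ → 𝒲
  complete : CompleteSpace 𝒲
  basis : IsSchauderBasis e
  𝔽 : Subfield ℝ
  countable : (𝔽 : Set ℝ).Countable
  norm_mem : ∀ (s : Finset ℕ) (a : ℕ → ℝ), (∀ i ∈ s, a i ∈ 𝔽) →
    ‖∑ i ∈ s, a i • e i‖ ∈ 𝔽

namespace Frame

variable {𝒲 : Type} [NormedAddCommGroup 𝒲] [NormedSpace ℝ 𝒲] (ctx : Frame 𝒲)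

/-- The `𝔽`-linear span of a set of vectors. -/
def fspan (S : Set 𝒲) : Set 𝒲 :=
  {v | ∃ t : Finset 𝒲, ↑t ⊆ S ∧ ∃ c : 𝒲 → ℝ, (∀ w, c w ∈ ctx.𝔽) ∧
    v = ∑ w ∈ t, c w • w}

/-- The countable `𝔽`-vector space `W` with basis `(e n)`. -/
def W : Set 𝒲 := ctx.fspan (Set.range ctx.e)

/-- `(y n)` is a block sequence with respect to the reference block basis `(b n)`:
a sequence of nonzero vectors of the `𝔽`-span of `(b n)` with successive supports. -/
def BlockSeqRel (b y : ℕ → 𝒲) : Prop :=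
  (∀ n, y n ∈ ctx.fspan (Set.range b)) ∧ (∀ n, y n ≠ 0) ∧
  ∃ D : ℕ → Finset ℕ, (∀ n, SuppIn b (y n) (D n)) ∧
    ∀ n, ∀ i ∈ D n, ∀ j ∈ D (n + 1), i < j

/-- `(y n)` is a block sequence (with respect to the basis `(e n)` of `W`). -/
def IsBlockSeq (y : ℕ → 𝒲) : Prop := ctx.BlockSeqRel ctx.e y

/-- `Y` is a block subspace of `X`: the `𝔽`-span of an infinite block sequence of
vectors of `X`. -/
def IsBlockSubspaceOf (Y X : Set 𝒲) : Prop :=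
  ∃ y : ℕ → 𝒲, ctx.IsBlockSeq y ∧ (∀ n, y n ∈ X) ∧ Y = ctx.fspan (Set.range y)

/-- `Y` is a block subspace of `W`. -/
def IsBlockSubspace (Y : Set 𝒲) : Prop := ctx.IsBlockSubspaceOf Y ctx.W

/-- `F` is a finite-dimensional `𝔽`-subspace of `X`. -/
def IsFinDimIn (F X : Set 𝒲) : Prop :=
  ∃ t : Finset 𝒲, ↑t ⊆ X ∧ F = ctx.fspan ↑t

/-- `n < F`: every vector of `F` is supported on basis vectors of index `> n`. -/
def NatLt (n : ℕ) (F : Set 𝒲) : Prop :=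
  ∀ x ∈ F, ∃ s : Finset ℕ, SuppIn ctx.e x s ∧ ∀ i ∈ s, n < i

/-- `V` is an `𝔽`-subspace of `𝒲`. -/
def IsSubspace (V : Set 𝒲) : Prop :=
  (0 : 𝒲) ∈ V ∧ (∀ u v : 𝒲, u ∈ V → v ∈ V → u + v ∈ V) ∧
    ∀ c : ℝ, c ∈ ctx.𝔽 → ∀ v ∈ V, c • v ∈ V

/-- `V` is infinite-dimensional (not contained in a finitely generated subspace). -/
def IsInfDim (V : Set 𝒲) : Prop :=
  ¬∃ t : Finset 𝒲, V ⊆ ctx.fspan ↑t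

/-- Game values of the asymptotic game `F^β_X`, for player II, computed by transfinite
recursion on the ordinal bound.  `IIWinsF X S β Facc vec` states: in the asymptotic game
below `X`, from a position where the vectors `vec` have been played and the
finite-dimensional subspaces played by II span `Facc`, and where I must now play a natural
number together with an ordinal `< β`, player II has a strategy so that the final outcome
lies in `S`. -/
noncomputable def IIWinsF (X : Set 𝒲) (S : Set (List 𝒲)) :
    Ordinal → Set 𝒲 → List 𝒲 → Prop :=
  WellFounded.fix (C := fun _ : Ordinal => Set 𝒲 → List 𝒲 → Prop) Ordinal.lt_wf
    (fun β ih Facc vec =>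
      ∀ n : ℕ, ∀ ξ : Ordinal, ∀ hξ : ξ < β,
        ∃ F : Set 𝒲, ctx.IsFinDimIn F X ∧ ctx.NatLt n F ∧
          ∃ x : 𝒲, x ≠ 0 ∧ x ∈ ctx.fspan (Facc ∪ F) ∧
            (ξ = 0 → vec ++ [x] ∈ S) ∧
            (ξ ≠ 0 → ih ξ hξ (ctx.fspan (Facc ∪ F)) (vec ++ [x])))

/-- Player II has a strategy in the asymptotic game `F^β_X` to play an outcome in `S`. -/
noncomputable def IIStratF (X : Set 𝒲) (β : Ordinal) (S : Set (List 𝒲)) : Prop :=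
  (β = 0 → ([] : List 𝒲) ∈ S) ∧ (β ≠ 0 → ctx.IIWinsF X S β (ctx.fspan ∅) [])

/-- Game values of the asymptotic game `F^β_X` for player I (who plays the integers and
the ordinals, trying to steer the outcome into `S`). -/
noncomputable def IWinsF (X : Set 𝒲) (S : Set (List 𝒲)) :
    Ordinal → Set 𝒲 → List 𝒲 → Prop :=
  WellFounded.fix (C := fun _ : Ordinal => Set 𝒲 → List 𝒲 → Prop) Ordinal.lt_wf
    (fun β ih Facc vec =>
      ∃ n : ℕ, ∃ ξ : Ordinal, ∃ hξ : ξ < β,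
        ∀ F : Set 𝒲, ctx.IsFinDimIn F X → ctx.NatLt n F →
        ∀ x : 𝒲, x ≠ 0 → x ∈ ctx.fspan (Facc ∪ F) →
          (ξ = 0 → vec ++ [x] ∈ S) ∧
          (ξ ≠ 0 → ih ξ hξ (ctx.fspan (Facc ∪ F)) (vec ++ [x])))

/-- Player I has a strategy in the asymptotic game `F^β_X` to play an outcome in `S`. -/
noncomputable def IStratF (X : Set 𝒲) (β : Ordinal) (S : Set (List 𝒲)) : Prop :=
  (β = 0 → ([] : List 𝒲) ∈ S) ∧ (β ≠ 0 → ctx.IWinsF X S β (ctx.fspan ∅) [])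

/-- Game values of the Gowers game `G^α_X` for player II. -/
noncomputable def IIWinsG (X : Set 𝒲) (S : Set (List 𝒲)) :
    Ordinal → Set 𝒲 → List 𝒲 → Prop :=
  WellFounded.fix (C := fun _ : Ordinal => Set 𝒲 → List 𝒲 → Prop) Ordinal.lt_wf
    (fun α ih Facc vec =>
      ∀ Y : Set 𝒲, ctx.IsBlockSubspaceOf Y X →
      ∀ ξ : Ordinal, ∀ hξ : ξ < α,
        ∃ F : Set 𝒲, ctx.IsFinDimIn F Y ∧
          ∃ x : 𝒲, x ≠ 0 ∧ x ∈ ctx.fspan (Facc ∪ F) ∧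
            (ξ = 0 → vec ++ [x] ∈ S) ∧
            (ξ ≠ 0 → ih ξ hξ (ctx.fspan (Facc ∪ F)) (vec ++ [x])))

/-- Player II has a strategy in the generalised Gowers game `G^α_X` to play in `S`. -/
noncomputable def IIStratG (X : Set 𝒲) (α : Ordinal) (S : Set (List 𝒲)) : Prop :=
  (α = 0 → ([] : List 𝒲) ∈ S) ∧ (α ≠ 0 → ctx.IIWinsG X S α (ctx.fspan ∅) [])

/-- Game values of the adversarial game `A^α_X` for player II (who plays the integers,
the finite-dimensional subspaces `F_l ⊆ Y_l` and the vectors `y_l`). -/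
noncomputable def IIWinsA (X : Set 𝒲) (S : Set (List 𝒲)) :
    Ordinal → Set 𝒲 → Set 𝒲 → List 𝒲 → Prop :=
  WellFounded.fix (C := fun _ : Ordinal => Set 𝒲 → Set 𝒲 → List 𝒲 → Prop)
    Ordinal.lt_wf
    (fun α ih Eacc Facc vec =>
      ∃ n : ℕ,
        ∀ E : Set 𝒲, ctx.IsFinDimIn E X → ctx.NatLt n E →
        ∀ x : 𝒲, x ≠ 0 → x ∈ ctx.fspan (Eacc ∪ E) →
        ∀ Y : Set 𝒲, ctx.IsBlockSubspaceOf Y X →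
        ∀ ξ : Ordinal, ∀ hξ : ξ < α,
          ∃ F : Set 𝒲, ctx.IsFinDimIn F Y ∧
            ∃ y : 𝒲, y ≠ 0 ∧ y ∈ ctx.fspan (Facc ∪ F) ∧
              (ξ = 0 → vec ++ [x, y] ∈ S) ∧
              (ξ ≠ 0 → ih ξ hξ (ctx.fspan (Eacc ∪ E)) (ctx.fspan (Facc ∪ F))
                (vec ++ [x, y])))

/-- Player II has a strategy in the adversarial game `A^α_X` to play in `S`. -/
noncomputable def IIStratA (X : Set 𝒲) (α : Ordinal) (S : Set (List 𝒲)) : Prop :=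
  (α = 0 → ([] : List 𝒲) ∈ S) ∧
  (α ≠ 0 → ctx.IIWinsA X S α (ctx.fspan ∅) (ctx.fspan ∅) [])

/-- Game values of the adversarial game `B^α_X` for player I (who plays the
finite-dimensional subspaces `E_l ⊆ Y_l`, the vectors `x_l`, the integers and the
ordinals). -/
noncomputable def IWinsB (X : Set 𝒲) (S : Set (List 𝒲)) :
    Ordinal → Set 𝒲 → Set 𝒲 → List 𝒲 → Prop :=
  WellFounded.fix (C := fun _ : Ordinal => Set 𝒲 → Set 𝒲 → List 𝒲 → Prop)
    Ordinal.lt_wf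
    (fun α ih Eacc Facc vec =>
      ∀ Y : Set 𝒲, ctx.IsBlockSubspaceOf Y X →
        ∃ E : Set 𝒲, ctx.IsFinDimIn E Y ∧
          ∃ x : 𝒲, x ≠ 0 ∧ x ∈ ctx.fspan (Eacc ∪ E) ∧
            ∃ n : ℕ, ∃ ξ : Ordinal, ∃ hξ : ξ < α,
              ∀ F : Set 𝒲, ctx.IsFinDimIn F X → ctx.NatLt n F →
              ∀ y : 𝒲, y ≠ 0 → y ∈ ctx.fspan (Facc ∪ F) →
                (ξ = 0 → vec ++ [x, y] ∈ S) ∧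
                (ξ ≠ 0 → ih ξ hξ (ctx.fspan (Eacc ∪ E)) (ctx.fspan (Facc ∪ F))
                  (vec ++ [x, y])))

/-- Player I has a strategy in the adversarial game `B^α_X` to play in `S`. -/
noncomputable def IStratB (X : Set 𝒲) (α : Ordinal) (S : Set (List 𝒲)) : Prop :=
  (α = 0 → ([] : List 𝒲) ∈ S) ∧
  (α ≠ 0 → ctx.IWinsB X S α (ctx.fspan ∅) (ctx.fspan ∅) [])

/-- Game values of the adversarial game `B^α_X` for player II (who plays the block
subspaces `Y_l`, the finite-dimensional subspaces `F_l` and the vectors `y_l`). -/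
noncomputable def IIWinsB (X : Set 𝒲) (S : Set (List 𝒲)) :
    Ordinal → Set 𝒲 → Set 𝒲 → List 𝒲 → Prop :=
  WellFounded.fix (C := fun _ : Ordinal => Set 𝒲 → Set 𝒲 → List 𝒲 → Prop)
    Ordinal.lt_wf
    (fun α ih Eacc Facc vec =>
      ∃ Y : Set 𝒲, ctx.IsBlockSubspaceOf Y X ∧
        ∀ E : Set 𝒲, ctx.IsFinDimIn E Y →
        ∀ x : 𝒲, x ≠ 0 → x ∈ ctx.fspan (Eacc ∪ E) →
        ∀ n : ℕ, ∀ ξ : Ordinal, ∀ hξ : ξ < α,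
          ∃ F : Set 𝒲, ctx.IsFinDimIn F X ∧ ctx.NatLt n F ∧
            ∃ y : 𝒲, y ≠ 0 ∧ y ∈ ctx.fspan (Facc ∪ F) ∧
              (ξ = 0 → vec ++ [x, y] ∈ S) ∧
              (ξ ≠ 0 → ih ξ hξ (ctx.fspan (Eacc ∪ E)) (ctx.fspan (Facc ∪ F))
                (vec ++ [x, y])))

/-- Player II has a strategy in the adversarial game `B^α_X` to play in `S`. -/
noncomputable def IIStratB (X : Set 𝒲) (α : Ordinal) (S : Set (List 𝒲)) : Prop :=
  (α = 0 → ([] : List 𝒲) ∈ S) ∧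
  (α ≠ 0 → ctx.IIWinsB X S α (ctx.fspan ∅) (ctx.fspan ∅) [])

end Frame

end Rosendal

namespace Rosendal

lemma schauder_partial {𝒲 : Type} [NormedAddCommGroup 𝒲] [NormedSpace ℝ 𝒲] [CompleteSpace 𝒲]
    (e : ℕ → 𝒲) (he : IsSchauderBasis e) :
    ∃ C : ℝ, 0 < C ∧ ∀ (n N : ℕ), n ≤ N → ∀ a : ℕ → ℝ,
      ‖∑ i ∈ Finset.range n, a i • e i‖ ≤ C * ‖∑ i ∈ Finset.range N, a i • e i‖ := by
  let ev : OnePoint ℕ → (C(OnePoint ℕ, 𝒲) →L[ℝ] 𝒲) := fun p => ContinuousMap.evalCLM ℝ p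
  let E : Submodule ℝ C(OnePoint ℕ, 𝒲) :=
    (LinearMap.ker (ev ((0 : ℕ) : OnePoint ℕ)).toLinearMap) ⊓
      ⨅ n : ℕ, (Submodule.span ℝ {e n}).comap
        (ev ((n + 1 : ℕ) : OnePoint ℕ) - ev ((n : ℕ) : OnePoint ℕ)).toLinearMap
  have hE : ∀ f : C(OnePoint ℕ, 𝒲), f ∈ E ↔ (f ((0 : ℕ) : OnePoint ℕ) = 0 ∧
      ∀ n : ℕ, ∃ c : ℝ, c • e n = f ((n + 1 : ℕ) : OnePoint ℕ) - f ((n : ℕ) : OnePoint ℕ)) := by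
    intro f
    simp [E, Submodule.mem_iInf, Submodule.mem_span_singleton, ev]
  have hclosed : IsClosed (E : Set C(OnePoint ℕ, 𝒲)) := by
    have : (E : Set C(OnePoint ℕ, 𝒲)) = {f | ev ((0 : ℕ) : OnePoint ℕ) f = 0} ∩
      ⋂ n : ℕ, (fun f => (ev ((n + 1 : ℕ) : OnePoint ℕ) - ev ((n : ℕ) : OnePoint ℕ)) f) ⁻¹'
        (Submodule.span ℝ {e n} : Set 𝒲) := by
      ext f
      simp [E, Submodule.mem_iInf]
    rw [this]
    refine IsClosed.inter (isClosed_eq (ContinuousLinearMap.continuous _) continuous_const) ?_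
    refine isClosed_iInter fun n => IsClosed.preimage (ContinuousLinearMap.continuous _) ?_
    exact Submodule.closed_of_finiteDimensional _
  haveI : CompleteSpace E := hclosed.completeSpace_coe
  let L : E →L[ℝ] 𝒲 := (ev OnePoint.infty).comp E.subtypeL
  -- partial sums of an element
  have hsum : ∀ (f : C(OnePoint ℕ, 𝒲)) (c : ℕ → ℝ), f ((0 : ℕ) : OnePoint ℕ) = 0 →
      (∀ n : ℕ, c n • e n = f ((n + 1 : ℕ) : OnePoint ℕ) - f ((n : ℕ) : OnePoint ℕ)) →
      ∀ n : ℕ, f ((n : ℕ) : OnePoint ℕ) = ∑ i ∈ Finset.range n, c i • e i := by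
    intro f c h0 hc n
    induction n with
    | zero => simpa using h0
    | succ n ih => rw [Finset.sum_range_succ, ← ih, hc]; abel
  have surj : Function.Surjective L := by
    intro v
    obtain ⟨a, ha, -⟩ := he v
    let f := OnePoint.continuousMapMkNat (fun N => ∑ i ∈ Finset.range N, a i • e i) v ha
    have hf : ∀ n : ℕ, f (n : OnePoint ℕ) = ∑ i ∈ Finset.range n, a i • e i := fun n => rfl
    refine ⟨⟨f, (hE f).2 ⟨by rw [hf]; simp, fun n => ⟨a n, ?_⟩⟩⟩, rfl⟩
    rw [hf, hf, Finset.sum_range_succ]; abel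
  obtain ⟨C, C0, hC⟩ := ContinuousLinearMap.exists_preimage_norm_le L surj
  refine ⟨C, C0, fun n N hnN a => ?_⟩
  obtain ⟨⟨f, hfE⟩, hf1, hf2⟩ := hC (∑ i ∈ Finset.range N, a i • e i)
  obtain ⟨h0, hc⟩ := (hE f).1 hfE
  choose c hc using hc
  have hs := hsum f c h0 hc
  have t1 : Tendsto (fun N => ∑ i ∈ Finset.range N, c i • e i) atTop
      (𝓝 (∑ i ∈ Finset.range N, a i • e i)) := by
    have h1 : Tendsto (fun n : ℕ => f (n : OnePoint ℕ)) atTop (𝓝 (f OnePoint.infty)) := by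
      refine (f.continuous.tendsto _).comp ?_
      have := OnePoint.tendsto_coe_infty (X := ℕ)
      simpa [Filter.coclosedCompact_eq_cocompact, Nat.cofinite_eq_atTop] using this
    have h2 : f OnePoint.infty = ∑ i ∈ Finset.range N, a i • e i := hf1
    rw [← h2]
    simpa only [hs] using h1
  let a' : ℕ → ℝ := fun i => if i < N then a i else 0
  have t2 : Tendsto (fun N => ∑ i ∈ Finset.range N, a' i • e i) atTop
      (𝓝 (∑ i ∈ Finset.range N, a i • e i)) := by
    refine tendsto_const_nhds.congr' ?_
    filter_upwards [eventually_ge_atTop N] with k hk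
    rw [← Finset.sum_subset (Finset.range_mono hk)]
    · refine Finset.sum_congr rfl fun i hi => ?_
      simp [a', Finset.mem_range.1 hi]
    · intro i _ hi
      simp only [Finset.mem_range] at hi
      simp [a', hi]
  have hca : c = a' := (he _).unique t1 t2
  have : ∑ i ∈ Finset.range n, a i • e i = f (n : OnePoint ℕ) := by
    rw [hs n, hca]
    refine Finset.sum_congr rfl fun i hi => ?_
    have : i < N := lt_of_lt_of_le (Finset.mem_range.1 hi) hnN
    simp [a', this]
  rw [this]
  exact (f.norm_coe_le_norm _).trans hf2

/-- blocks: supports. -/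
lemma block_struct {𝒲 : Type} [NormedAddCommGroup 𝒲] [NormedSpace ℝ 𝒲] (b x : ℕ → 𝒲)
    (hx0 : ∀ n, x n ≠ 0) (D : ℕ → Finset ℕ) (hD : ∀ n, SuppIn b (x n) (D n))
    (hlt : ∀ n, ∀ i ∈ D n, ∀ j ∈ D (n + 1), i < j) :
    (∀ n, (D n).Nonempty) ∧ (∀ k m, k < m → ∀ i ∈ D k, ∀ j ∈ D m, i < j) ∧
      ∀ n, ∀ i ∈ D n, n ≤ i := by
  have hne : ∀ n, (D n).Nonempty := by
    intro n
    rw [Finset.nonempty_iff_ne_empty]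
    intro h
    obtain ⟨a, ha⟩ := hD n
    rw [h] at ha
    exact hx0 n (by simpa using ha)
  have h2 : ∀ k m, k < m → ∀ i ∈ D k, ∀ j ∈ D m, i < j := by
    intro k m hkm
    induction m, hkm using Nat.le_induction with
    | base => exact hlt k
    | succ m hm ih =>
      intro i hi j hj
      obtain ⟨q, hq⟩ := hne m
      exact (ih i hi q hq).trans (hlt m q hq j hj)
  refine ⟨hne, h2, fun n => ?_⟩
  induction n with
  | zero => intro i _; exact Nat.zero_le _
  | succ n ih =>
    intro i hi
    obtain ⟨q, hq⟩ := hne n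
    have := hlt n q hq i hi
    have := ih q hq
    omega

lemma block_coef (𝒲 : Type) [NormedAddCommGroup 𝒲] [NormedSpace ℝ 𝒲] (ctx : Frame 𝒲)
    (x : ℕ → 𝒲) (hx : ctx.IsBlockSeq x) (hxn : ∀ n, ‖x n‖ = 1) :
    ∃ M : ℝ, 0 ≤ M ∧ ∀ (s : Finset ℕ) (a : ℕ → ℝ), ∀ j ∈ s,
      |a j| ≤ M * ‖∑ i ∈ s, a i • x i‖ := by
  haveI := ctx.complete
  obtain ⟨C, C0, hC⟩ := schauder_partial ctx.e ctx.basis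
  obtain ⟨-, hx0, D, hD, hlt⟩ := hx
  obtain ⟨hne, hord, -⟩ := block_struct ctx.e x hx0 D hD hlt
  choose c0 hc0 using hD
  let c : ℕ → ℕ → ℝ := fun k i => if i ∈ D k then c0 k i else 0
  have hcfull : ∀ k n, (∀ i ∈ D k, i < n) → ∑ i ∈ Finset.range n, c k i • ctx.e i = x k := by
    intro k n h
    rw [hc0 k]
    symm
    rw [← Finset.sum_subset (s₁ := D k) (fun i hi => Finset.mem_range.2 (h i hi))]
    · exact Finset.sum_congr rfl fun i hi => by simp [c, hi]
    · intro i _ hi; simp [c, hi]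
  have hczero : ∀ k n, (∀ i ∈ D k, n ≤ i) → ∑ i ∈ Finset.range n, c k i • ctx.e i = 0 := by
    intro k n h
    refine Finset.sum_eq_zero fun i hi => ?_
    have : i ∉ D k := fun hh => absurd (h i hh) (by simpa using hi)
    simp [c, this]
  have key : ∀ (s : Finset ℕ) (a : ℕ → ℝ) (m : ℕ),
      ‖∑ i ∈ s with i < m, a i • x i‖ ≤ C * ‖∑ i ∈ s, a i • x i‖ := by
    intro s a m
    let n := (D m).min' (hne m)
    let N := n + (s.biUnion D).sup id + 1
    let g : ℕ → ℝ := fun i => ∑ k ∈ s, a k * c k i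
    have hg : ∀ q, ∑ i ∈ Finset.range q, g i • ctx.e i =
        ∑ k ∈ s, a k • ∑ i ∈ Finset.range q, c k i • ctx.e i := by
      intro q
      simp only [g, Finset.sum_smul, Finset.smul_sum, smul_smul]
      rw [Finset.sum_comm]
    have h := hC n N (by omega) g
    rw [hg, hg] at h
    have e1 : ∑ k ∈ s, a k • ∑ i ∈ Finset.range N, c k i • ctx.e i = ∑ k ∈ s, a k • x k := by
      refine Finset.sum_congr rfl fun k hk => ?_
      rw [hcfull]
      intro i hi
      have : i ≤ (s.biUnion D).sup id :=
        Finset.le_sup (f := id) (Finset.mem_biUnion.2 ⟨k, hk, hi⟩)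
      omega
    have e2 : ∑ k ∈ s, a k • ∑ i ∈ Finset.range n, c k i • ctx.e i =
        ∑ i ∈ s with i < m, a i • x i := by
      rw [Finset.sum_filter]
      refine Finset.sum_congr rfl fun k hk => ?_
      split_ifs with hkm
      · rw [hcfull]
        intro i hi
        exact hord k m hkm i hi _ (Finset.min'_mem _ _)
      · rw [hczero, smul_zero]
        intro i hi
        rcases eq_or_lt_of_le (not_lt.1 hkm) with rfl | h'
        · exact Finset.min'_le _ _ hi
        · exact (hord m k h' _ (Finset.min'_mem _ _) i hi).le
    rwa [e1, e2] at h
  refine ⟨2 * C, by positivity, fun s a j hj => ?_⟩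
  have e3 : a j • x j = ∑ i ∈ s with i < j + 1, a i • x i - ∑ i ∈ s with i < j, a i • x i := by
    have : (s.filter (fun i => i < j + 1)) = insert j (s.filter (fun i => i < j)) := by
      ext i; simp only [Finset.mem_filter, Finset.mem_insert]
      constructor
      · rintro ⟨h1, h2⟩; rcases eq_or_ne i j with h | h
        · exact Or.inl h
        · exact Or.inr ⟨h1, by omega⟩
      · rintro (rfl | ⟨h1, h2⟩)
        · exact ⟨hj, by omega⟩
        · exact ⟨h1, by omega⟩
    rw [this, Finset.sum_insert (by simp)]; abel
  have : |a j| = ‖a j • x j‖ := by rw [norm_smul, hxn, mul_one, Real.norm_eq_abs]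
  rw [this, e3]
  have := key s a j
  have := key s a (j+1)
  refine (norm_sub_le _ _).trans (by linarith)

end Rosendal
namespace Rosendal

inductive Small {V : Type} (T : Set (List V)) : Ordinal.{0} → List V → Prop
  | notin (α : Ordinal.{0}) (s : List V) : s ∉ T → Small T α s
  | step (α ξ : Ordinal.{0}) (s : List V) : ξ < α → (∀ v, Small T ξ (s ++ [v])) → Small T α s

lemma Small.acc {V : Type} (T : Set (List V))
    (hT : ∀ s t : List V, s <+: t → t ∈ T → s ∈ T) (α : Ordinal.{0}) (s : List V)
    (h : Small T α s) : ∀ hs : s ∈ T,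
      ∃ h : Acc (fun t s : T => s.val <+: t.val ∧ s.val ≠ t.val) ⟨s, hs⟩, h.rank < α := by
  induction h with
  | notin α s h => intro hs; exact absurd hs h
  | step α ξ s hξ _ ih =>
    intro hs
    have key : ∀ t : T, (s <+: t.val ∧ s ≠ t.val) →
        ∃ h : Acc (fun t s : T => s.val <+: t.val ∧ s.val ≠ t.val) t, h.rank < ξ := by
      rintro ⟨t, ht⟩ ⟨⟨r, hr⟩, hne⟩
      simp only at hr hne
      cases r with
      | nil => exact absurd (by simpa using hr) hne
      | cons v r =>
        have hpre : s ++ [v] <+: t := ⟨r, by simpa using hr⟩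
        obtain ⟨h1, h2⟩ := ih v (hT _ _ hpre ht)
        by_cases heq : s ++ [v] = t
        · subst heq; exact ⟨h1, h2⟩
        · have hh := h1.inv (y := ⟨t, ht⟩) ⟨hpre, heq⟩
          exact ⟨hh, (Acc.rank_lt_of_rel h1 (a := ⟨t, ht⟩) ⟨hpre, heq⟩).trans h2⟩
    have hacc : Acc (fun t s : T => s.val <+: t.val ∧ s.val ≠ t.val) ⟨s, hs⟩ :=
      Acc.intro _ fun t ht => (key t ht).1
    refine ⟨hacc, lt_of_le_of_lt ?_ hξ⟩
    rw [Acc.rank_eq]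
    refine ciSup_le' fun b => ?_
    rw [Order.succ_le_iff]
    exact (key b.1 b.2).2

lemma treeRank_le_of_small {V : Type} [NormedAddCommGroup V] [NormedSpace ℝ V] (T : Set (List V))
    (hT : ∀ s t : List V, s <+: t → t ∈ T → s ∈ T) (h0 : [] ∈ T) (α : Ordinal.{0})
    (h : Small T α []) : treeRank T ≤ (α : WithTop Ordinal) := by
  obtain ⟨h1, h2⟩ := h.acc T hT α [] h0
  have key : ∀ t : T,
        ∃ h : Acc (fun t s : T => s.val <+: t.val ∧ s.val ≠ t.val) t, h.rank < α := by
    rintro ⟨t, ht⟩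
    by_cases heq : [] = t
    · subst heq; exact ⟨h1, h2⟩
    · exact ⟨h1.inv (y := ⟨t, ht⟩) ⟨List.nil_prefix, heq⟩,
        (Acc.rank_lt_of_rel h1 (a := ⟨t, ht⟩) ⟨List.nil_prefix, heq⟩).trans h2⟩
  have wf : WellFounded (fun t s : T => s.val <+: t.val ∧ s.val ≠ t.val) :=
    ⟨fun t => (key t).1⟩
  rw [treeRank, dif_pos wf, WithTop.coe_le_coe]
  refine ciSup_le' fun b => ?_
  rw [Order.succ_le_iff]
  exact (key b).2

lemma embIndex_le {V : Type} [NormedAddCommGroup V] [NormedSpace ℝ V] (y : ℕ → V) (Y : Set V)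
    (α : Ordinal.{0}) (h : ∀ K : ℝ, 1 ≤ K → treeRank (embTree y Y K) ≤ (α : WithTop Ordinal)) :
    embIndex y Y ≤ (α : WithTop Ordinal) := by
  rw [embIndex, if_neg]
  · rw [WithTop.coe_le_coe]
    refine csSup_le' ?_
    rintro o ⟨K, hK, ho⟩
    have := h K hK
    rw [← ho] at this
    exact WithTop.coe_le_coe.1 this
  · rintro ⟨K, hK, ho⟩
    have := h K hK
    rw [ho] at this
    exact absurd this (by simp)

lemma SeqEquiv.mono_len {V : Type} [NormedAddCommGroup V] [NormedSpace ℝ V] {K : ℝ} {k k' : ℕ}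
    {v v' y : ℕ → V} (h : SeqEquiv K k v y) (hk : k' ≤ k) (hv : ∀ i < k', v' i = v i) :
    SeqEquiv K k' v' y := by
  intro a
  have e : ∀ z : ℕ → V, ∑ i ∈ Finset.range k, (if i < k' then a i else 0) • z i =
      ∑ i ∈ Finset.range k', a i • z i := by
    intro z
    rw [← Finset.sum_subset (Finset.range_mono hk)]
    · exact Finset.sum_congr rfl fun i hi => by rw [if_pos (Finset.mem_range.1 hi)]
    · intro i _ hi
      rw [if_neg (by simpa using hi), zero_smul]
  have := h (fun i => if i < k' then a i else 0)
  simp only [e] at this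
  have e2 : ∑ i ∈ Finset.range k', a i • v' i = ∑ i ∈ Finset.range k', a i • v i :=
    Finset.sum_congr rfl fun i hi => by rw [hv i (Finset.mem_range.1 hi)]
  rwa [e2]

lemma embTree_closed {V : Type} [NormedAddCommGroup V] [NormedSpace ℝ V] (y : ℕ → V) (Y : Set V)
    (K : ℝ) (s t : List V) (hst : s <+: t) (ht : t ∈ embTree y Y K) : s ∈ embTree y Y K := by
  obtain ⟨r, rfl⟩ := hst
  refine ⟨fun v hv => ht.1 v (by simp [hv]), ht.2.mono_len (by simp) ?_⟩
  intro i hi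
  exact (List.getD_append _ _ _ _ hi).symm

lemma embTree_nil {V : Type} [NormedAddCommGroup V] [NormedSpace ℝ V] (y : ℕ → V) (Y : Set V)
    (K : ℝ) : [] ∈ embTree y Y K := by
  refine ⟨by simp, fun a => by simp⟩

/-- last vector is nonzero -/
lemma embTree_ne_zero {V : Type} [NormedAddCommGroup V] [NormedSpace ℝ V] (y : ℕ → V) (Y : Set V)
    (hy : ∀ n, y n ≠ 0)
    (K : ℝ) (s : List V) (v : V) (ht : s ++ [v] ∈ embTree y Y K) : v ≠ 0 := by
  rintro rfl
  have := (ht.2 (fun i => if i = s.length then 1 else 0)).2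
  simp [hy] at this

/-- The finitely many positions -/
lemma reach_bound {σ ι : Type*} (init : σ) (step : σ → ι → σ) (nn : σ → ℕ) (Mv : ℕ → Set ι)
    (hfin : ∀ N, (Mv N).Finite) (hmono : Monotone Mv) :
    ∃ (g : ℕ → ℕ) (Reach : ℕ → ℕ → σ → Prop), (∀ N, Reach N 0 init) ∧
      (∀ N r st i, Reach N r st → i ∈ Mv N → Reach N (r + 1) (step st i)) ∧
      (∀ N N' r st, N ≤ N' → Reach N r st → Reach N' r st) ∧
      (∀ N r st, r ≤ N → Reach N r st → nn st ≤ g N) := by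
  let R : ℕ → ℕ → Set σ := fun N r =>
    Nat.rec {init} (fun _ P => Set.image2 step P (Mv N)) r
  have hRs : ∀ N r, R N (r + 1) = Set.image2 step (R N r) (Mv N) := fun N r => rfl
  have hRf : ∀ N r, (R N r).Finite := by
    intro N r
    induction r with
    | zero => exact Set.finite_singleton _
    | succ r ih => rw [hRs]; exact ih.image2 _ (hfin N)
  have hU : ∀ N, (⋃ r ∈ Finset.range (N + 1), R N r).Finite := fun N =>
    Set.Finite.biUnion (Finset.finite_toSet _) fun r _ => hRf N r
  have hb : ∀ N, ∃ B, ∀ st ∈ (⋃ r ∈ Finset.range (N + 1), R N r), nn st ≤ B := by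
    intro N
    obtain ⟨B, hB⟩ := ((hU N).image nn).bddAbove
    exact ⟨B, fun st hst => hB ⟨st, hst, rfl⟩⟩
  choose g hg using hb
  refine ⟨g, fun N r st => st ∈ R N r, fun N => rfl, ?_, ?_, ?_⟩
  · intro N r st i h1 h2
    rw [hRs]; exact Set.mem_image2_of_mem h1 h2
  · intro N N' r st hN
    have : R N r ⊆ R N' r := by
      induction r with
      | zero => exact subset_rfl
      | succ r ih => rw [hRs, hRs]; exact Set.image2_subset ih (hmono hN)
    exact fun h => this h
  · intro N r st hr h
    refine hg N st ?_
    simp only [Set.mem_iUnion]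
    exact ⟨r, Finset.mem_range.2 (by omega), h⟩

namespace Frame

variable {V : Type} [NormedAddCommGroup V] [NormedSpace ℝ V] (ctx : Frame V)

lemma fspan_eq (S : Set V) : ctx.fspan S = (Submodule.span ctx.𝔽 S : Set V) := by
  ext v
  constructor
  · rintro ⟨t, ht, c, hc, rfl⟩
    refine Submodule.sum_mem _ fun w hw => ?_
    exact Submodule.smul_mem _ (⟨c w, hc w⟩ : ctx.𝔽) (Submodule.subset_span (ht hw))
  · intro hv
    obtain ⟨f, t, ht, -, hf⟩ := Submodule.mem_span_iff_exists_finset_subset.1 hv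
    refine ⟨t, ht, fun w => f w, fun w => (f w).2, ?_⟩
    rw [← hf]
    rfl

lemma fspan_union (S S' : Set V) : ctx.fspan (ctx.fspan S ∪ ctx.fspan S') = ctx.fspan (S ∪ S') := by
  simp only [fspan_eq]
  rw [Submodule.span_union, Submodule.span_span, Submodule.span_span, Submodule.span_union]

lemma fspan_mono {S S' : Set V} (h : S ⊆ S') : ctx.fspan S ⊆ ctx.fspan S' := by
  simp only [fspan_eq]
  exact Submodule.span_mono h

lemma subset_fspan (S : Set V) : S ⊆ ctx.fspan S := by
  simp only [fspan_eq]
  exact Submodule.subset_span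

lemma fspan_subset_real (S : Set V) : ctx.fspan S ⊆ (Submodule.span ℝ S : Set V) := by
  rintro v ⟨t, ht, c, hc, rfl⟩
  exact Submodule.sum_mem _ fun w hw => Submodule.smul_mem _ _ (Submodule.subset_span (ht hw))

lemma fspan_map (S : Set V) (T : V →ₗ[ℝ] V) {v : V} (hv : v ∈ ctx.fspan S) :
    T v ∈ ctx.fspan (T '' S) := by
  obtain ⟨t, ht, c, hc, rfl⟩ := hv
  rw [fspan_eq, map_sum]
  refine Submodule.sum_mem _ fun w hw => ?_
  rw [map_smul]
  exact Submodule.smul_mem _ (⟨c w, hc w⟩ : ctx.𝔽)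
    (Submodule.subset_span (Set.mem_image_of_mem _ (ht hw)))

/-- an element of the span of `x j`, `j ∈ J` is in the span of finitely many -/
lemma fspan_fin (x : ℕ → V) (J : Set ℕ) {v : V} (hv : v ∈ ctx.fspan (x '' J)) :
    ∃ N : ℕ, ∀ N' ≥ N, v ∈ ctx.fspan (x '' {j | j ∈ J ∧ j < N'}) := by
  obtain ⟨t, ht, c, hc, rfl⟩ := hv
  have : ∀ w ∈ t, ∃ j ∈ J, x j = w := fun w hw => ht hw
  choose! f hf using this
  refine ⟨t.sup f + 1, fun N' hN => ⟨t, ?_, c, hc, rfl⟩⟩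
  intro w hw
  refine ⟨f w, ⟨(hf w hw).1, ?_⟩, (hf w hw).2⟩
  have := Finset.le_sup (f := f) hw
  omega

lemma fspan_countable (x : ℕ → V) : (ctx.fspan (Set.range x)).Countable := by
  rw [fspan_eq]
  have : Countable ctx.𝔽 := ctx.countable.to_subtype
  have : (Submodule.span ctx.𝔽 (Set.range x) : Set V) =
      Set.range (Finsupp.linearCombination ctx.𝔽 x) := by
    rw [← Finsupp.range_linearCombination]
    rfl
  rw [this]
  exact Set.countable_range _

end Frame

end Rosendal
namespace Rosendal

lemma shift_op {V : Type} [NormedAddCommGroup V] [NormedSpace ℝ V] (x : ℕ → V)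
    (hxn : ∀ n, ‖x n‖ = 1) (M : ℝ) (hM0 : 0 ≤ M)
    (hM : ∀ (s : Finset ℕ) (a : ℕ → ℝ), ∀ j ∈ s, |a j| ≤ M * ‖∑ i ∈ s, a i • x i‖)
    (d p : ℕ) :
    ∃ T : V →ₗ[ℝ] V, (∀ j, T (x j) = x (if j < d then p + j else j)) ∧
      ∀ v ∈ Submodule.span ℝ (x '' {j | j < d ∨ p + d ≤ j}),
        ‖T v‖ ≤ (1 + 2 * d * M) * ‖v‖ ∧ ‖v‖ ≤ (1 + 2 * d * M) * ‖T v‖ := by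
  have hli : LinearIndependent ℝ x := by
    rw [linearIndependent_iff']
    intro s a h j hj
    have := hM s a j hj
    rw [h, norm_zero, mul_zero] at this
    exact abs_eq_zero.1 (le_antisymm this (abs_nonneg _))
  let τ : ℕ → ℕ := fun j => if j < d then p + j else j
  obtain ⟨T, hT⟩ := LinearMap.exists_extend
    ((Finsupp.linearCombination ℝ (x ∘ τ)).comp hli.repr)
  have hTx : ∀ j, T (x j) = x (τ j) := by
    intro j
    have hmem : x j ∈ Submodule.span ℝ (Set.range x) := Submodule.subset_span ⟨j, rfl⟩
    have := LinearMap.congr_fun hT ⟨x j, hmem⟩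
    simp only [LinearMap.comp_apply, Submodule.subtype_apply] at this
    rw [this, hli.repr_eq_single j ⟨x j, hmem⟩ rfl]
    simp
  refine ⟨T, hTx, fun v hv => ?_⟩
  obtain ⟨l, hl, rfl⟩ := (Finsupp.mem_span_image_iff_linearCombination ℝ).1 hv
  rw [Finsupp.linearCombination_apply, Finsupp.sum]
  set s := l.support with hs
  have hsJ : ∀ j ∈ s, j < d ∨ p + d ≤ j := fun j hj => (Finsupp.mem_supported ℝ l).1 hl hj
  have hinj : Set.InjOn τ s := by
    intro i hi j hj hij
    have h1 := hsJ i hi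
    have h2 := hsJ j hj
    simp only [τ] at hij
    split_ifs at hij <;> omega
  have hTv : T (∑ i ∈ s, l i • x i) = ∑ i ∈ s, l i • x (τ i) := by
    simp [map_sum, hTx]
  have hb1 : ∀ j ∈ s, |l j| ≤ M * ‖∑ i ∈ s, l i • x i‖ := hM s l
  have hb2 : ∀ j ∈ s, |l j| ≤ M * ‖∑ i ∈ s, l i • x (τ i)‖ := by
    intro j hj
    have hinv : ∀ i ∈ s, Function.invFunOn τ s (τ i) = i := fun i hi =>
      hinj.leftInvOn_invFunOn hi
    have := hM (s.image τ) (fun i => l (Function.invFunOn τ s i)) (τ j)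
      (Finset.mem_image_of_mem _ hj)
    rw [Finset.sum_image hinj] at this
    simp only [hinv j hj] at this
    rwa [Finset.sum_congr rfl (fun i hi => by rw [hinv i hi])] at this
  have hdiff : ∀ B : ℝ, 0 ≤ B → (∀ j ∈ s, |l j| ≤ B) →
      ‖∑ i ∈ s, l i • x (τ i) - ∑ i ∈ s, l i • x i‖ ≤ 2 * d * B := by
    intro B hB0 hB
    rw [← Finset.sum_sub_distrib]
    have e : ∑ i ∈ s, (l i • x (τ i) - l i • x i) =
        ∑ i ∈ s with i < d, (l i • x (τ i) - l i • x i) := by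
      rw [Finset.sum_filter]
      refine Finset.sum_congr rfl fun i hi => ?_
      split_ifs with h
      · rfl
      · simp [τ, h]
    rw [e]
    refine (norm_sum_le _ _).trans ?_
    have : ∀ i ∈ s.filter (fun i => i < d), ‖l i • x (τ i) - l i • x i‖ ≤ 2 * B := by
      intro i hi
      refine (norm_sub_le _ _).trans ?_
      rw [norm_smul, norm_smul, hxn, hxn, Real.norm_eq_abs]
      have := hB i (Finset.mem_filter.1 hi).1
      linarith
    refine (Finset.sum_le_card_nsmul _ _ _ this).trans ?_
    have hc : (s.filter (fun i => i < d)).card ≤ d := by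
      calc _ ≤ (Finset.range d).card := Finset.card_le_card (by intro i hi; simp at hi ⊢; exact hi.2)
        _ = d := by simp
    have hc' : ((s.filter (fun i => i < d)).card : ℝ) ≤ d := by exact_mod_cast hc
    rw [nsmul_eq_mul]
    nlinarith
  rw [hTv]
  have d1 := hdiff _ (by positivity) hb1
  have d2 := hdiff _ (by positivity) hb2
  have t1 := norm_sub_norm_le (∑ i ∈ s, l i • x (τ i)) (∑ i ∈ s, l i • x i)
  have t2 := norm_sub_norm_le (∑ i ∈ s, l i • x i) (∑ i ∈ s, l i • x (τ i))
  rw [norm_sub_rev] at t2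
  constructor <;> nlinarith

lemma SeqEquiv.shift {V : Type} [NormedAddCommGroup V] [NormedSpace ℝ V] {K c K' : ℝ} {k : ℕ}
    {v v' y : ℕ → V} (h : SeqEquiv K k v y) (hK : 1 ≤ K) (hc : 1 ≤ c) (hK' : K * c ≤ K')
    (hv : ∀ a : ℕ → ℝ, ‖∑ i ∈ Finset.range k, a i • v' i‖ ≤ c * ‖∑ i ∈ Finset.range k, a i • v i‖ ∧
      ‖∑ i ∈ Finset.range k, a i • v i‖ ≤ c * ‖∑ i ∈ Finset.range k, a i • v' i‖) :
    SeqEquiv K' k v' y := by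
  intro a
  obtain ⟨h1, h2⟩ := h a
  obtain ⟨h3, h4⟩ := hv a
  have hKc : 0 < K * c := by positivity
  have hK'0 : 0 < K' := lt_of_lt_of_le hKc hK'
  generalize ‖∑ i ∈ Finset.range k, a i • v' i‖ = A at *
  have hB0 : 0 ≤ ‖∑ i ∈ Finset.range k, a i • v i‖ := norm_nonneg _
  generalize ‖∑ i ∈ Finset.range k, a i • v i‖ = B at *
  have hY0 : 0 ≤ ‖∑ i ∈ Finset.range k, a i • y i‖ := norm_nonneg _
  generalize ‖∑ i ∈ Finset.range k, a i • y i‖ = Y at *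
  have hK0 : 0 < K := by linarith
  have hA0 : 0 ≤ A := by
    by_contra hA
    push Not at hA
    nlinarith
  constructor
  · rw [one_div, inv_mul_le_iff₀ (by assumption)] at *
    calc A ≤ c * B := h3
      _ ≤ c * (K * Y) := by gcongr
      _ = (K * c) * Y := by ring
      _ ≤ K' * Y := by gcongr
  · calc Y ≤ K * B := h2
      _ ≤ K * (c * A) := by gcongr
      _ = (K * c) * A := by ring
      _ ≤ K' * A := by gcongr

lemma win_step {V : Type} [NormedAddCommGroup V] [NormedSpace ℝ V] (ctx : Frame V)
    (x : ℕ → V) (hx : ctx.IsBlockSeq x) (Sset : Set (List V)) (β : Ordinal.{0}) (S : Finset ℕ)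
    (vec : List V)
    (h : ctx.IWinsF (ctx.fspan (Set.range x)) Sset β (ctx.fspan (x '' S)) vec) :
    ∃ (n : ℕ) (ξ : Ordinal.{0}), ξ < β ∧ ∀ S' : Finset ℕ, (∀ j ∈ S', n < j) →
      ∀ u : V, u ≠ 0 → u ∈ ctx.fspan (x '' ((S ∪ S' : Finset ℕ) : Set ℕ)) →
        (ξ = 0 → vec ++ [u] ∈ Sset) ∧
        (ξ ≠ 0 → ctx.IWinsF (ctx.fspan (Set.range x)) Sset ξ
          (ctx.fspan (x '' ((S ∪ S' : Finset ℕ) : Set ℕ))) (vec ++ [u])) := by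
  classical
  rw [Frame.IWinsF, WellFounded.fix_eq] at h
  obtain ⟨n, ξ, hξ, h⟩ := h
  refine ⟨n, ξ, hξ, fun S' hS' u hu huS => ?_⟩
  have hun : ctx.fspan (ctx.fspan (x '' S) ∪ ctx.fspan (x '' S')) =
      ctx.fspan (x '' ((S ∪ S' : Finset ℕ) : Set ℕ)) := by
    rw [Frame.fspan_union, Finset.coe_union, Set.image_union]
  have := h (ctx.fspan (x '' S')) ?_ ?_ u hu (by rwa [hun])
  · rw [hun] at this
    exact this
  · refine ⟨S'.image x, ?_, by simp⟩
    intro v hv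
    simp only [Finset.coe_image] at hv
    exact ctx.subset_fspan _ (Set.image_subset_range _ _ hv)
  · obtain ⟨-, hx0, D, hD, hlt⟩ := hx
    obtain ⟨-, -, hge⟩ := block_struct ctx.e x hx0 D hD hlt
    intro v hv
    have hv' := ctx.fspan_subset_real _ hv
    obtain ⟨l, hl, rfl⟩ := (Finsupp.mem_span_image_iff_linearCombination ℝ).1 hv'
    have hsJ : ∀ j ∈ l.support, j ∈ S' := fun j hj => (Finsupp.mem_supported ℝ l).1 hl hj
    choose c hc using hD
    refine ⟨l.support.biUnion D, ⟨fun i => ∑ k ∈ l.support, if i ∈ D k then l k * c k i else 0, ?_⟩, ?_⟩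
    · rw [Finsupp.linearCombination_apply, Finsupp.sum]
      simp only [Finset.sum_smul]
      rw [Finset.sum_comm]
      refine Finset.sum_congr rfl fun k hk => ?_
      rw [← Finset.sum_subset (Finset.subset_biUnion_of_mem D hk)]
      · conv_lhs => rw [hc k, Finset.smul_sum]
        exact Finset.sum_congr rfl fun i hi => by rw [if_pos hi, smul_smul]
      · intro i _ hi
        rw [if_neg hi, zero_smul]
    · intro i hi
      obtain ⟨k, hk, hik⟩ := Finset.mem_biUnion.1 hi
      exact lt_of_lt_of_le (hS' k (hsJ k hk)) (hge k i hik)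

end Rosendal
namespace Rosendal

/-- Suppose `(x n)` is a normalised block sequence such that, for every
normalised block sequence `(y n)` in `X = [x n]` and every `K ≥ 1`, I has a strategy in
`F^β_X` to play outcomes not `K`-equivalent to `(y n)`.  Then for every normalised block
sequence `(y n)` in `X` there are successive finite intervals `I 0 < I 1 < …` of `ℕ` such
that for every infinite `A ⊆ ℕ`, `Emb((y n), [x j : j ∉ ⋃_{m ∈ A} I m]) ≤ β`. -/
theorem tightness_intervals
    (𝒲 : Type) [NormedAddCommGroup 𝒲] [NormedSpace ℝ 𝒲] (ctx : Frame 𝒲)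
    (x : ℕ → 𝒲) (hx : ctx.IsBlockSeq x) (hxn : ∀ n, ‖x n‖ = 1)
    (β : Ordinal) (hβ : β < (Cardinal.aleph 1).ord)
    (h : ∀ y : ℕ → 𝒲, ctx.BlockSeqRel x y → (∀ n, ‖y n‖ = 1) → ∀ K : ℝ, 1 ≤ K →
      ctx.IStratF (ctx.fspan (Set.range x)) β {l | ¬OutcomeEquiv K l y}) :
    ∀ y : ℕ → 𝒲, ctx.BlockSeqRel x y → (∀ n, ‖y n‖ = 1) →
      ∃ I : ℕ → Finset ℕ, IntervalSeq I ∧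
        ∀ A : Set ℕ, A.Infinite →
          embIndex y (ctx.fspan {v | ∃ j : ℕ, (∀ m ∈ A, j ∉ I m) ∧ v = x j})
            ≤ (β : WithTop Ordinal) := by
  classical
  intro y hy hyn
  obtain ⟨M, hM0, hM⟩ := block_coef 𝒲 ctx x hx hxn
  have hβ0 : β ≠ 0 := by
    intro h0
    exact (h y hy hyn 1 le_rfl).1 h0 (fun a => by simp)
  let X := ctx.fspan (Set.range x)
  let Win : ℝ → (Ordinal.{0} × Finset ℕ × List 𝒲) → Prop := fun K st =>
    ctx.IWinsF X {l | ¬OutcomeEquiv K l y} st.1 (ctx.fspan (x '' st.2.1)) st.2.2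
  have hch : ∀ (K : ℝ) (st : Ordinal.{0} × Finset ℕ × List 𝒲), ∃ (n : ℕ) (ξ : Ordinal.{0}),
      Win K st → (ξ < st.1 ∧ ∀ S' : Finset ℕ, (∀ j ∈ S', n < j) →
      ∀ u : 𝒲, u ≠ 0 → u ∈ ctx.fspan (x '' ((st.2.1 ∪ S' : Finset ℕ) : Set ℕ)) →
        (ξ = 0 → ¬OutcomeEquiv K (st.2.2 ++ [u]) y) ∧
        (ξ ≠ 0 → Win K (ξ, st.2.1 ∪ S', st.2.2 ++ [u]))) := by
    intro K st
    by_cases hw : Win K st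
    · obtain ⟨n, ξ, h1⟩ := win_step ctx x hx _ _ _ _ hw
      exact ⟨n, ξ, fun _ => h1⟩
    · exact ⟨0, 0, fun hw' => absurd hw' hw⟩
  choose nn xi hstrat using hch
  let init : Ordinal.{0} × Finset ℕ × List 𝒲 := (β, ∅, [])
  have hinit : ∀ K, 1 ≤ K → Win K init := by
    intro K hK
    have := (h y hy hyn K hK).2 hβ0
    simpa [Win, init, X] using this
  obtain ⟨w, hw⟩ := (ctx.fspan_countable x).exists_eq_range
    ⟨x 0, ctx.subset_fspan _ ⟨0, rfl⟩⟩
  let Mv : ℕ → Set (Finset ℕ × 𝒲) := fun N =>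
    ((Finset.range N).powerset : Set (Finset ℕ)) ×ˢ (w '' Set.Iio N)
  have hMfin : ∀ N, (Mv N).Finite := fun N =>
    (Finset.finite_toSet _).prod ((Set.finite_Iio N).image w)
  have hMmono : Monotone Mv := by
    intro N N' hN
    refine Set.prod_mono ?_ (Set.image_mono (Set.Iio_subset_Iio hN))
    exact_mod_cast Finset.powerset_mono.2 (Finset.range_mono hN)
  have hrb := fun K : ℝ => reach_bound init
    (fun st (mv : Finset ℕ × 𝒲) => (xi K st, st.2.1 ∪ mv.1, st.2.2 ++ [mv.2])) (nn K) Mv hMfin hMmono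
  choose g Reach hR0 hRs hRm hRb using hrb
  let Kf : ℕ → ℕ → ℝ := fun i d => (i + 1) * (1 + 2 * d * M)
  let α : ℕ → ℕ := fun m => Nat.rec 0 (fun _ am => am + 1 +
    ∑ i ∈ Finset.range (am + 1), ∑ d ∈ Finset.range (am + 1), g (Kf i d) am) m
  have hαs : ∀ m, α (m + 1) = α m + 1 +
    ∑ i ∈ Finset.range (α m + 1), ∑ d ∈ Finset.range (α m + 1), g (Kf i d) (α m) := fun m => rfl
  have hαlt : ∀ m, α m < α (m + 1) := fun m => by rw [hαs]; omega
  have hαmono : StrictMono α := strictMono_nat_of_lt_succ hαlt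
  have hαge : ∀ m, m ≤ α m := fun m => hαmono.le_apply
  have hαg : ∀ m i d, i ≤ α m → d ≤ α m → α m + g (Kf i d) (α m) < α (m + 1) := by
    intro m i d hi hd
    rw [hαs]
    have h1 : g (Kf i d) (α m) ≤ ∑ d ∈ Finset.range (α m + 1), g (Kf i d) (α m) :=
      Finset.single_le_sum (f := fun d => g (Kf i d) (α m)) (fun _ _ => Nat.zero_le _)
        (Finset.mem_range.2 (by omega))
    have h2 : ∑ d ∈ Finset.range (α m + 1), g (Kf i d) (α m) ≤
        ∑ i ∈ Finset.range (α m + 1), ∑ d ∈ Finset.range (α m + 1), g (Kf i d) (α m) :=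
      Finset.single_le_sum (f := fun i => ∑ d ∈ Finset.range (α m + 1), g (Kf i d) (α m))
        (fun _ _ => Nat.zero_le _) (Finset.mem_range.2 (by omega))
    omega
  refine ⟨fun m => Finset.Icc (α m) (α (m + 1) - 1), ⟨fun m => ⟨α m, α (m + 1) - 1, ?_, rfl⟩, ?_⟩, ?_⟩
  · have := hαlt m; omega
  · intro m i hi j hj
    rw [Finset.mem_Icc] at hi hj
    have := hαlt m
    omega
  intro A hA
  refine embIndex_le _ _ _ fun K hK => ?_
  refine treeRank_le_of_small _ (embTree_closed _ _ _) (embTree_nil _ _ _) _ ?_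
  let J : Set ℕ := {j | ∀ m ∈ A, j ∉ Finset.Icc (α m) (α (m + 1) - 1)}
  have hZ : {v | ∃ j : ℕ, (∀ m ∈ A, j ∉ Finset.Icc (α m) (α (m + 1) - 1)) ∧ v = x j} = x '' J := by
    ext v
    constructor
    · rintro ⟨j, hj, rfl⟩; exact ⟨j, hj, rfl⟩
    · rintro ⟨j, hj, rfl⟩; exact ⟨j, hj, rfl⟩
  rw [hZ]
  have hJ : ∀ j ∈ J, ∀ q ∈ A, α q ≤ j → α (q + 1) ≤ j := by
    intro j hj q hq hqj
    have := hj q hq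
    rw [Finset.mem_Icc] at this
    have := hαlt q
    omega
  obtain ⟨a, haA, ha⟩ := hA.exists_gt ⌈K⌉₊
  have haK : K ≤ a := (Nat.le_ceil K).trans (by exact_mod_cast ha.le)
  obtain ⟨d, hd⟩ : ∃ d : ℕ, d = α a := ⟨_, rfl⟩
  set c : ℝ := 1 + 2 * (d : ℝ) * M with hcdef
  have hc1 : 1 ≤ c := by
    have : 0 ≤ 2 * (d : ℝ) * M := by positivity
    linarith
  set K' := Kf a d with hK'
  have hKK' : K * c ≤ K' := by
    change K * c ≤ ((a : ℝ) + 1) * c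
    have : 0 ≤ c := by linarith
    gcongr
    linarith
  have hK'1 : 1 ≤ K' := by nlinarith
  set p := α (a + 1) - d with hp
  have hpd : p + d = α (a + 1) := by
    have := hαlt a
    omega
  obtain ⟨T, hTx, hTn⟩ := shift_op x hxn M hM0 hM d p
  set τ : ℕ → ℕ := fun j => if j < d then p + j else j with hτ
  have hJd : ∀ j ∈ J, j < d ∨ p + d ≤ j := by
    intro j hj
    rcases lt_or_ge j d with h1 | h1
    · exact Or.inl h1
    · exact Or.inr (by rw [hpd]; exact hJ j hj a haA (hd ▸ h1))
  have hn0 : nn K' init < p := by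
    have h1 := hRb K' d 0 init (Nat.zero_le _) (hR0 K' d)
    have h2 := hαg a a d (hαge a) hd.le
    rw [← hd, ← hK'] at h2
    omega
  have houtc : ∀ l ∈ embTree y (ctx.fspan (x '' J)) K, OutcomeEquiv K' (l.map T) y := by
    rintro l ⟨hl1, hl2⟩
    unfold OutcomeEquiv
    rw [List.length_map]
    refine hl2.shift hK hc1 hKK' fun b => ?_
    have e : ∑ i ∈ Finset.range l.length, b i • (l.map T).getD i 0 =
        T (∑ i ∈ Finset.range l.length, b i • l.getD i 0) := by
      rw [map_sum]
      refine Finset.sum_congr rfl fun i _ => ?_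
      have := List.getD_map (l := l) (d := (0 : 𝒲)) (n := i) T
      rw [map_zero] at this
      rw [this, map_smul]
    rw [e]
    refine hTn _ (Submodule.sum_mem _ fun i hi => Submodule.smul_mem _ _ ?_)
    have hil : i < l.length := Finset.mem_range.1 hi
    have hmem : l.getD i 0 ∈ l := by
      rw [List.getD_eq_getElem _ _ hil]
      exact List.getElem_mem hil
    exact Submodule.span_mono (Set.image_mono hJd) (ctx.fspan_subset_real _ (hl1 _ hmem))
  have main : ∀ ξ0 : Ordinal.{0}, ∀ (S : Finset ℕ) (s : List 𝒲) (N r : ℕ),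
      Reach K' N r (ξ0, S, s.map T) → Win K' (ξ0, S, s.map T) →
      (∀ j ∈ J, τ j ∉ S → nn K' (ξ0, S, s.map T) < τ j) →
      Small (embTree y (ctx.fspan (x '' J)) K) ξ0 s := by
    intro ξ0
    induction ξ0 using WellFoundedLT.induction with
    | ind ξ0 ih =>
    intro S s N r hreach hwin hinv
    obtain ⟨hξ, hstep⟩ := hstrat K' _ hwin
    refine Small.step _ _ _ hξ fun v => ?_
    by_cases hsv : s ++ [v] ∈ embTree y (ctx.fspan (x '' J)) K
    swap
    · exact Small.notin _ _ hsv
    have hvJ : v ∈ ctx.fspan (x '' J) := hsv.1 v (by simp)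
    obtain ⟨N1, hN1⟩ := ctx.fspan_fin x J hvJ
    have hTv0 : T v ≠ 0 := by
      refine embTree_ne_zero y Set.univ hy.2.1 K' (s.map T) (T v) ⟨by simp, ?_⟩
      have := houtc _ hsv
      simpa [OutcomeEquiv] using this
    have hTvX : ∀ N' ≥ N1, T v ∈ ctx.fspan (x '' (τ '' {j | j ∈ J ∧ j < N'})) := by
      intro N' hN'
      refine ctx.fspan_mono ?_ (ctx.fspan_map _ T (hN1 N' hN'))
      rintro _ ⟨_, ⟨j, hj, rfl⟩, rfl⟩
      exact ⟨τ j, ⟨j, hj, rfl⟩, (hTx j).symm⟩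
    have hTvr : T v ∈ Set.range w := by
      rw [← hw]
      exact ctx.fspan_mono (Set.image_subset_range _ _) (hTvX N1 le_rfl)
    obtain ⟨cd, hcd⟩ := hTvr
    obtain ⟨q, hqA, hq⟩ := hA.exists_gt (a + 1 + N + (r + 1) + cd + N1)
    have hqα := hαge q
    have haq : α (a + 1) ≤ α q := hαmono.monotone (show a + 1 ≤ q by omega)
    have hdq : d < α q := hd ▸ lt_of_lt_of_le (hαlt a) haq
    let S' : Finset ℕ := ((Finset.range (α q)).filter (fun j => j ∈ J)).image τ \ S
    have hS'n : ∀ j ∈ S', nn K' (ξ0, S, s.map T) < j := by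
      intro j hj
      obtain ⟨h1, h2⟩ := Finset.mem_sdiff.1 hj
      obtain ⟨i, hi, rfl⟩ := Finset.mem_image.1 h1
      exact hinv i (Finset.mem_filter.1 hi).2 h2
    have hS'r : S' ⊆ Finset.range (α q) := by
      intro j hj
      obtain ⟨h1, h2⟩ := Finset.mem_sdiff.1 hj
      obtain ⟨i, hi, rfl⟩ := Finset.mem_image.1 h1
      have := Finset.mem_range.1 (Finset.mem_filter.1 hi).1
      rw [Finset.mem_range]
      simp only [hτ]
      split_ifs <;> omega
    have hSS' : ∀ j ∈ J, j < α q → τ j ∈ S ∪ S' := by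
      intro j hj hjq
      by_cases hjS : τ j ∈ S
      · exact Finset.mem_union_left _ hjS
      · refine Finset.mem_union_right _ (Finset.mem_sdiff.2 ⟨?_, hjS⟩)
        exact Finset.mem_image_of_mem _ (Finset.mem_filter.2 ⟨Finset.mem_range.2 hjq, hj⟩)
    have hmem : T v ∈ ctx.fspan (x '' ((S ∪ S' : Finset ℕ) : Set ℕ)) := by
      refine ctx.fspan_mono (Set.image_mono ?_) (hTvX (α q) (by omega))
      rintro _ ⟨j, ⟨hj, hjq⟩, rfl⟩
      exact hSS' j hj hjq
    obtain ⟨hz, hnz⟩ := hstep S' hS'n (T v) hTv0 hmem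
    have hmap : s.map T ++ [T v] = (s ++ [v]).map T := by simp
    have hξ0 : xi K' (ξ0, S, s.map T) ≠ 0 := by
      intro h0
      refine hz h0 ?_
      simp only [hmap]
      exact houtc _ hsv
    have hwin' := hnz hξ0
    have hreach' : Reach K' (α q) (r + 1) (xi K' (ξ0, S, s.map T), S ∪ S', (s ++ [v]).map T) := by
      have := hRs K' (α q) r _ (S', T v) (hRm K' N (α q) r _ (by omega) hreach) ?_
      · simpa only [hmap] using this
      · refine Set.mk_mem_prod ?_ ?_
        · exact Finset.mem_coe.2 (Finset.mem_powerset.2 hS'r)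
        · exact ⟨cd, by simp only [Set.mem_Iio]; omega, hcd⟩
    refine ih _ hξ (S ∪ S') (s ++ [v]) (α q) (r + 1) hreach' ?_ ?_
    · simpa only [hmap] using hwin'
    · intro j hj hjS
      have hjq : α q ≤ j := by
        refine not_lt.1 fun hlt => ?_
        exact hjS (hSS' j hj hlt)
      have h1 := hJ j hj q hqA hjq
      have h2 := hRb K' (α q) (r + 1) _ (by omega) hreach'
      have h3 := hαg q a d (by have := hαge q; omega) hdq.le
      have h4 : τ j = j := by simp only [hτ]; rw [if_neg]; omega
      rw [← hK'] at h3
      rw [h4]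
      omega
  refine main β ∅ [] 0 0 (hR0 K' 0) (hinit K' hK'1) ?_
  intro j hj _
  refine lt_of_lt_of_le hn0 ?_
  have := hJd j hj
  simp only [hτ]
  split_ifs <;> omega

end Rosendal
end

section
/- Let α < ω₁. Then there is a block subspace X = [x_n] ⊆ W such that one of the following holds: (1) for every normalised block sequence (y_n) in X there is a sequence I_0 < I_1 < I_2 < … of finite intervals of ℕ such that for every infinite A ⊆ ℕ, Emb((y_n), [x_j : j ∉ ⋃_{m∈A} I_m]) ≤ ω·α; or (2) for every infinite-dimensional subspace Y ⊆ X and every block sequence (z_n) in X, Emb((z_n), Y) > α. -/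
open Filter Topology

namespace Rosendal

section Combinatorics

variable {k : Type} [Field k]

/-- Vectors supported on `[n, ∞)`. -/
def Wt (k : Type) [Field k] (n : ℕ) : Submodule k (ℕ →₀ k) where
  carrier := {v | ∀ i < n, v i = 0}
  add_mem' := by
    intro a b ha hb i hi
    simp [ha i hi, hb i hi]
  zero_mem' := by intro i _; rfl
  smul_mem' := by
    intro c a ha i hi
    simp [ha i hi]

lemma mem_Wt {n : ℕ} {v : ℕ →₀ k} : v ∈ Wt k n ↔ ∀ i < n, v i = 0 := Iff.rfl

lemma Wt_anti {m n : ℕ} (h : m ≤ n) : Wt k n ≤ Wt k m :=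
  fun _ hv i hi => hv i (lt_of_lt_of_le hi h)

/-- Subspaces with nonzero vectors in every tail. -/
def Big (X : Submodule k (ℕ →₀ k)) : Prop := ∀ n, ∃ v ∈ X, v ∈ Wt k n ∧ v ≠ 0

lemma Big.inf {X : Submodule k (ℕ →₀ k)} (h : Big X) (m : ℕ) : Big (X ⊓ Wt k m) := by
  intro n
  obtain ⟨v, hv, hvn, h0⟩ := h (max m n)
  exact ⟨v, ⟨hv, Wt_anti (le_max_left _ _) hvn⟩, Wt_anti (le_max_right _ _) hvn, h0⟩

/-- Almost inclusion. -/
def AlmLe (X' X : Submodule k (ℕ →₀ k)) : Prop := ∃ m, X' ⊓ Wt k m ≤ X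

lemma AlmLe.of_le {X' X : Submodule k (ℕ →₀ k)} (h : X' ≤ X) : AlmLe X' X :=
  ⟨0, inf_le_left.trans h⟩

/-- Block sequences in `k^(∞)`. -/
def Blk (x : ℕ → (ℕ →₀ k)) (m : ℕ → ℕ) : Prop :=
  StrictMono m ∧ ∀ n, x n ≠ 0 ∧ x n ∈ Wt k (m n) ∧ ∀ i, m (n + 1) ≤ i → x n i = 0

lemma Blk.apply_zero {x : ℕ → (ℕ →₀ k)} {m : ℕ → ℕ} (h : Blk x m) {i j q : ℕ}
    (h1 : m i ≤ q) (h2 : q < m (i + 1)) (hij : j ≠ i) : x j q = 0 := by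
  rcases lt_or_gt_of_ne hij with hj | hj
  · exact (h.2 j).2.2 q ((h.1.monotone hj).trans h1)
  · exact (h.2 j).2.1 q (h2.trans_le (h.1.monotone hj))

lemma Blk.exists_ne {x : ℕ → (ℕ →₀ k)} {m : ℕ → ℕ} (h : Blk x m) (i : ℕ) :
    ∃ q, m i ≤ q ∧ q < m (i + 1) ∧ x i q ≠ 0 := by
  by_contra hc
  push Not at hc
  apply (h.2 i).1
  ext q
  by_cases h1 : m i ≤ q
  · by_cases h2 : q < m (i + 1)
    · exact hc q h1 h2
    · exact (h.2 i).2.2 q (not_lt.mp h2)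
  · exact (h.2 i).2.1 q (not_le.mp h1)

lemma Blk.tail {x : ℕ → (ℕ →₀ k)} {m : ℕ → ℕ} (h : Blk x m) (N : ℕ) :
    Submodule.span k (Set.range x) ⊓ Wt k (m N) ≤ Submodule.span k (x '' Set.Ici N) := by
  rintro v ⟨hv, hvN⟩
  obtain ⟨c, rfl⟩ := (Finsupp.mem_span_range_iff_exists_finsupp).1 hv
  have key : ∀ i < N, c i = 0 := by
    intro i hi
    obtain ⟨q, h1, h2, h3⟩ := h.exists_ne i
    have h4 := hvN q (h2.trans_le (h.1.monotone hi))
    rw [Finsupp.sum, Finsupp.finset_sum_apply] at h4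
    rw [Finset.sum_eq_single i] at h4
    · simpa [h3] using h4
    · intro j _ hj
      simp [h.apply_zero h1 h2 hj]
    · intro hi
      simp [Finsupp.notMem_support_iff.1 hi]
  refine Submodule.sum_mem _ fun i hi => Submodule.smul_mem _ _ (Submodule.subset_span ⟨i, ?_, rfl⟩)
  by_contra hN
  exact (Finsupp.mem_support_iff.1 hi) (key i (not_le.1 hN))

lemma Blk.le_m {x : ℕ → (ℕ →₀ k)} {m : ℕ → ℕ} (h : Blk x m) {n j : ℕ} (hj : n ≤ j) :
    x j ∈ Wt k n := Wt_anti (hj.trans (h.1.id_le j)) (h.2 j).2.1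

lemma Blk.big {x : ℕ → (ℕ →₀ k)} {m : ℕ → ℕ} (h : Blk x m) :
    Big (Submodule.span k (Set.range x)) := fun n =>
  ⟨x n, Submodule.subset_span ⟨n, rfl⟩, h.le_m le_rfl, (h.2 n).1⟩

/-- Diagonal block sequences. -/
lemma exists_blk (V : ℕ → Submodule k (ℕ →₀ k)) (hV : ∀ n, Big (V n)) :
    ∃ x m, Blk x m ∧ ∀ n, x n ∈ V n := by
  have step : ∀ n a : ℕ, ∃ p : (ℕ →₀ k) × ℕ, p.1 ∈ V n ∧ p.1 ∈ Wt k a ∧ p.1 ≠ 0 ∧ a < p.2 ∧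
      ∀ i, p.2 ≤ i → p.1 i = 0 := by
    intro n a
    obtain ⟨v, h1, h2, h3⟩ := hV n a
    refine ⟨⟨v, max (a + 1) (v.support.sup id + 1)⟩, h1, h2, h3, by simp, ?_⟩
    intro i hi
    by_contra hne
    have : i ≤ v.support.sup id := Finset.le_sup (f := id) (Finsupp.mem_support_iff.2 hne)
    have := (le_max_right _ _).trans hi
    omega
  choose F hF using step
  let m : ℕ → ℕ := fun n => Nat.rec 0 (fun n a => (F n a).2) n
  have hm : ∀ n, m (n + 1) = (F n (m n)).2 := fun n => rfl
  refine ⟨fun n => (F n (m n)).1, m, ⟨strictMono_nat_of_lt_succ fun n => ?_, fun n => ?_⟩, fun n => ?_⟩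
  · rw [hm]; exact (hF n (m n)).2.2.2.1
  · exact ⟨(hF n (m n)).2.2.1, (hF n (m n)).2.1, (hF n (m n)).2.2.2.2⟩
  · exact (hF n (m n)).1

lemma diag {ι : Type*} [Countable ι] (D : ι → Submodule k (ℕ →₀ k) → Prop)
    (hered : ∀ i X X', D i X → AlmLe X' X → D i X') (X : Submodule k (ℕ →₀ k)) (hX : Big X)
    (dense : ∀ i, ∀ X' ≤ X, Big X' → ∃ X'' ≤ X', Big X'' ∧ D i X'') :
    ∃ X' ≤ X, Big X' ∧ ∀ i, D i X' := by
  rcases isEmpty_or_nonempty ι with he | he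
  · exact ⟨X, le_rfl, hX, fun i => he.elim i⟩
  obtain ⟨g, hg⟩ := exists_surjective_nat ι
  have step : ∀ n : ℕ, ∀ Y : {Y : Submodule k (ℕ →₀ k) // Y ≤ X ∧ Big Y},
      ∃ Z : {Y : Submodule k (ℕ →₀ k) // Y ≤ X ∧ Big Y}, Z.1 ≤ Y.1 ∧ D (g n) Z.1 := by
    rintro n ⟨Y, hY, hB⟩
    obtain ⟨Z, h1, h2, h3⟩ := dense (g n) Y hY hB
    exact ⟨⟨Z, h1.trans hY, h2⟩, h1, h3⟩
  choose F hF using step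
  let V : ℕ → {Y : Submodule k (ℕ →₀ k) // Y ≤ X ∧ Big Y} :=
    fun n => Nat.rec ⟨X, le_rfl, hX⟩ (fun n a => F n a) n
  have hV : ∀ n, V (n + 1) = F n (V n) := fun n => rfl
  have anti : Antitone fun n => (V n).1 := antitone_nat_of_succ_le fun n => by
    rw [hV]; exact (hF n (V n)).1
  obtain ⟨x, m, hb, hx⟩ := exists_blk (fun n => (V n).1) (fun n => (V n).2.2)
  refine ⟨Submodule.span k (Set.range x), ?_, hb.big, fun i => ?_⟩
  · rw [Submodule.span_le]
    rintro _ ⟨n, rfl⟩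
    exact (V n).2.1 (hx n)
  · obtain ⟨n, rfl⟩ := hg i
    have := (hF n (V n)).2
    rw [← hV] at this
    refine hered _ _ _ this ⟨m (n + 1), (hb.tail (n + 1)).trans ?_⟩
    rw [Submodule.span_le]
    rintro _ ⟨j, hj, rfl⟩
    exact anti hj (hx j)

variable (E : List (ℕ →₀ k) → List (ℕ →₀ k) → Prop)

abbrev LV (k : Type) [Field k] := List (ℕ →₀ k)

def HG (X : Submodule k (ℕ →₀ k)) (P : LV k → LV k → LV k → Prop) (s t f u : LV k) : Prop :=
  ∀ Y : Submodule k (ℕ →₀ k), Big Y → Y ≤ X → ∃ f' t' : LV k, (∀ v ∈ f', v ∈ Y) ∧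
    (∀ v ∈ t', v ∈ Submodule.span k {w | w ∈ f ++ f'}) ∧ t'.length = u.length ∧
    E (s ++ u) (t ++ t') ∧ P (s ++ u) (t ++ t') (f ++ f')

def HB (X : Submodule k (ℕ →₀ k)) (P : LV k → LV k → LV k → Prop) (s t f u : LV k) : Prop :=
  ∃ n : ℕ, ∀ f' t' : LV k, (∀ v ∈ f', v ∈ X ⊓ Wt k n) →
    (∀ v ∈ t', v ∈ Submodule.span k {w | w ∈ f ++ f'}) → t'.length = u.length →
    E (s ++ u) (t ++ t') → P (s ++ u) (t ++ t') (f ++ f')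

def GG (X : Submodule k (ℕ →₀ k)) (ξ : Ordinal.{0}) : LV k → LV k → LV k → Prop :=
  fun s t f => ∃ n : ℕ, ∀ u : LV k, (∀ v ∈ u, v ∈ X ⊓ Wt k n) →
    ∀ ξ' : Ordinal.{0}, ∀ _h : ξ' < ξ, HG E X (GG X ξ') s t f u
termination_by ξ

def BB (X : Submodule k (ℕ →₀ k)) (ξ : Ordinal.{0}) : LV k → LV k → LV k → Prop :=
  fun s t f => ∀ Y : Submodule k (ℕ →₀ k), Big Y → Y ≤ X → ∃ u : LV k, (∀ v ∈ u, v ∈ Y) ∧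
    ∃ ξ' : Ordinal.{0}, ∃ _h : ξ' < ξ, HB E X (BB X ξ') s t f u
termination_by ξ

variable {E}

lemma HG.mono {X X' : Submodule k (ℕ →₀ k)} {P P' : LV k → LV k → LV k → Prop} {s t f u : LV k}
    (h : HG E X P s t f u) (hle : AlmLe X' X) (hP : ∀ s t f, P s t f → P' s t f) :
    HG E X' P' s t f u := by
  obtain ⟨m, hm⟩ := hle
  intro Y hY hYX
  obtain ⟨f', t', h1, h2, h3, h4, h5⟩ :=
    h (Y ⊓ Wt k m) (hY.inf m) ((inf_le_inf_right _ hYX).trans hm)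
  exact ⟨f', t', fun v hv => (h1 v hv).1, h2, h3, h4, hP _ _ _ h5⟩

lemma HB.mono {X X' : Submodule k (ℕ →₀ k)} {P P' : LV k → LV k → LV k → Prop} {s t f u : LV k}
    (h : HB E X P s t f u) (hle : AlmLe X' X) (hP : ∀ s t f, P s t f → P' s t f) :
    HB E X' P' s t f u := by
  obtain ⟨m, hm⟩ := hle
  obtain ⟨n, hn⟩ := h
  refine ⟨max m n, fun f' t' h1 h2 h3 h4 => hP _ _ _ (hn f' t' (fun v hv => ?_) h2 h3 h4)⟩
  exact ⟨hm ⟨(h1 v hv).1, Wt_anti (le_max_left _ _) (h1 v hv).2⟩,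
    Wt_anti (le_max_right _ _) (h1 v hv).2⟩

lemma GG.mono {X X' : Submodule k (ℕ →₀ k)} (hle : AlmLe X' X) (ξ : Ordinal.{0}) :
    ∀ s t f : LV k, GG E X ξ s t f → GG E X' ξ s t f := by
  induction ξ using WellFoundedLT.induction with
  | ind ξ ih =>
    intro s t f h
    rw [GG] at h ⊢
    obtain ⟨n, hn⟩ := h
    obtain ⟨m, hm⟩ := id hle
    refine ⟨max m n, fun u hu ξ' hξ' => (hn u (fun v hv => ?_) ξ' hξ').mono hle (ih ξ' hξ')⟩
    exact ⟨hm ⟨(hu v hv).1, Wt_anti (le_max_left _ _) (hu v hv).2⟩,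
      Wt_anti (le_max_right _ _) (hu v hv).2⟩

lemma BB.mono {X X' : Submodule k (ℕ →₀ k)} (hle : AlmLe X' X) (ξ : Ordinal.{0}) :
    ∀ s t f : LV k, BB E X ξ s t f → BB E X' ξ s t f := by
  induction ξ using WellFoundedLT.induction with
  | ind ξ ih =>
    intro s t f h
    rw [BB] at h ⊢
    intro Y hY hYX
    obtain ⟨m, hm⟩ := id hle
    obtain ⟨u, hu, ξ', hξ', hB⟩ :=
      h (Y ⊓ Wt k m) (hY.inf m) ((inf_le_inf_right _ hYX).trans hm)
    exact ⟨u, fun v hv => (hu v hv).1, ξ', hξ', hB.mono hle (ih ξ' hξ')⟩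

def Dec (E : LV k → LV k → Prop) (ξ : Ordinal.{0}) (s t f : LV k) (X : Submodule k (ℕ →₀ k)) :
    Prop := GG E X ξ s t f ∨ BB E X ξ s t f

lemma Dec.mono {ξ : Ordinal.{0}} {s t f : LV k} {X X' : Submodule k (ℕ →₀ k)}
    (h : Dec E ξ s t f X) (hle : AlmLe X' X) : Dec E ξ s t f X' :=
  h.imp (GG.mono hle ξ s t f) (BB.mono hle ξ s t f)

lemma countable_Iio_of_lt {α ξ : Ordinal.{0}} (hα : (Set.Iic α).Countable) (h : ξ ≤ α) :
    Countable (Set.Iio ξ) :=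
  (hα.mono fun _ hx => (le_of_lt hx).trans h).to_subtype

lemma dec_dense [Countable k] {α : Ordinal.{0}} (hα : (Set.Iic α).Countable) (ξ : Ordinal.{0}) :
    ξ ≤ α → ∀ s t f : LV k, ∀ X : Submodule k (ℕ →₀ k), Big X →
      ∃ X' ≤ X, Big X' ∧ Dec E ξ s t f X' := by
  induction ξ using WellFoundedLT.induction with
  | ind ξ ih =>
    intro hξ s t f X hX
    haveI := countable_Iio_of_lt hα hξ
    obtain ⟨X₁, hX₁, hB₁, hD₁⟩ := diag
      (fun (i : Set.Iio ξ × LV k × LV k × LV k) Z => Dec E i.1.1 i.2.1 i.2.2.1 i.2.2.2 Z)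
      (fun i Z Z' h hle => h.mono hle) X hX
      (fun i Z _ hZ => ih i.1.1 i.1.2 ((le_of_lt i.1.2).trans hξ) _ _ _ Z hZ)
    obtain ⟨X₂, hX₂, hB₂, hD₂⟩ := diag
      (fun (i : Set.Iio ξ × LV k) Z => HG E Z (GG E Z i.1.1) s t f i.2 ∨
        HB E Z (BB E Z i.1.1) s t f i.2)
      (fun i Z Z' h hle => h.imp (fun h => h.mono hle (GG.mono hle _))
        (fun h => h.mono hle (BB.mono hle _))) X₁ hB₁
      (by
        rintro ⟨⟨ξ', hξ'⟩, u⟩ Z hZ hZB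
        by_cases hG : HG E Z (GG E Z ξ') s t f u
        · exact ⟨Z, le_rfl, hZB, Or.inl hG⟩
        · rw [HG] at hG
          push Not at hG
          obtain ⟨Y, hY, hYZ, hno⟩ := hG
          refine ⟨Y, hYZ, hY, Or.inr ⟨0, fun f' t' h1 h2 h3 h4 => ?_⟩⟩
          have h5 := hno f' t' (fun v hv => (h1 v hv).1) h2 h3 h4
          have h6 := (hD₁ ⟨⟨ξ', hξ'⟩, s ++ u, t ++ t', f ++ f'⟩).mono (AlmLe.of_le hZ)
          exact BB.mono (AlmLe.of_le hYZ) _ _ _ _ (h6.resolve_left h5))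
    by_cases hc : ∃ Y ≤ X₂, Big Y ∧ ∀ u : LV k, (∀ v ∈ u, v ∈ Y) → ∀ ξ' < ξ,
        HG E X₂ (GG E X₂ ξ') s t f u
    · obtain ⟨Y, hY, hYB, h⟩ := hc
      refine ⟨Y, (hY.trans hX₂).trans hX₁, hYB, Or.inl ?_⟩
      rw [GG]
      exact ⟨0, fun u hu ξ' hξ' => (h u (fun v hv => (hu v hv).1) ξ' hξ').mono (AlmLe.of_le hY)
        (GG.mono (AlmLe.of_le hY) _)⟩
    · refine ⟨X₂, hX₂.trans hX₁, hB₂, Or.inr ?_⟩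
      rw [BB]
      intro Y hYB hY
      push Not at hc
      obtain ⟨u, hu, ξ', hξ', hno⟩ := hc Y hY hYB
      exact ⟨u, hu, ξ', hξ', (hD₂ ⟨⟨ξ', hξ'⟩, u⟩).resolve_left hno⟩

/-- Stabilised subspace for countably many games. -/
lemma exists_decided [Countable k] {α : Ordinal.{0}} (hα : (Set.Iic α).Countable)
    (Es : ℕ → LV k → LV k → Prop) :
    ∃ x m, Blk (k := k) x m ∧ ∀ K, Dec (Es K) α [] [] [] (Submodule.span k (Set.range x)) := by
  have hT : Big (⊤ : Submodule k (ℕ →₀ k)) := fun n =>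
    ⟨Finsupp.single n 1, trivial, fun i hi => by
      rw [Finsupp.single_apply, if_neg (by omega)], by simp⟩
  obtain ⟨X, -, hB, hD⟩ := diag (fun K Z => Dec (Es K) α [] [] [] Z)
    (fun i Z Z' h hle => h.mono hle) ⊤ hT
    (fun K Z _ hZ => dec_dense hα α le_rfl _ _ _ Z hZ)
  obtain ⟨x, m, hb, hx⟩ := exists_blk (fun _ => X) (fun _ => hB)
  refine ⟨x, m, hb, fun K => (hD K).mono (AlmLe.of_le ?_)⟩
  rw [Submodule.span_le]
  rintro _ ⟨n, rfl⟩
  exact hx n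

end Combinatorics

end Rosendal


namespace Rosendal

section Trees

/-- `l` has rank at least `β` in `T`. -/
def RR {A : Type} (T : Set (List A)) (β : Ordinal.{0}) : List A → Prop :=
  fun l => l ∈ T ∧ ∀ γ : Ordinal.{0}, ∀ _h : γ < β, ∃ w, RR T γ (l ++ [w])
termination_by β

variable {A : Type} {T : Set (List A)}

lemma RR.mem {β : Ordinal.{0}} {l : List A} (h : RR T β l) : l ∈ T := by
  rw [RR] at h; exact h.1

lemma RR.anti {β γ : Ordinal.{0}} {l : List A} (h : RR T β l) (hγ : γ ≤ β) : RR T γ l := by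
  rw [RR] at h ⊢
  exact ⟨h.1, fun δ hδ => h.2 δ (hδ.trans_le hγ)⟩

lemma RR.extend {β : Ordinal.{0}} (m : ℕ) : ∀ {l : List A}, RR T (β + m) l →
    ∃ l' : List A, l'.length = m ∧ RR T β (l ++ l') := by
  induction m with
  | zero => intro l h; exact ⟨[], rfl, by simpa using h⟩
  | succ m ih =>
    intro l h
    rw [RR] at h
    obtain ⟨w, hw⟩ := h.2 (β + m) (by
      rw [add_lt_add_iff_left]
      exact_mod_cast Nat.lt_succ_self m)
    obtain ⟨l', h1, h2⟩ := ih hw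
    exact ⟨w :: l', by simp [h1], by simpa using h2⟩

lemma RR.extend_omega {ξ ξ' : Ordinal.{0}} (h : ξ' < ξ) (m : ℕ) {l : List A}
    (hl : RR T (Ordinal.omega0 * ξ) l) :
    ∃ l' : List A, l'.length = m ∧ RR T (Ordinal.omega0 * ξ') (l ++ l') := by
  refine RR.extend m (hl.anti ?_)
  calc Ordinal.omega0 * ξ' + m ≤ Ordinal.omega0 * ξ' + Ordinal.omega0 := by
        gcongr; exact (Ordinal.natCast_lt_omega0 m).le
    _ = Ordinal.omega0 * Order.succ ξ' := (Ordinal.mul_succ _ _).symm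
    _ ≤ _ := by gcongr; exact Order.succ_le_of_lt h

end Trees

lemma exists_dom {P : Type*} [Countable P] (g : P → ℕ → ℕ) :
    ∃ h : ℕ → ℕ, ∀ p, ∀ᶠ a in atTop, g p a ≤ h a := by
  obtain ⟨c, hc⟩ := exists_injective_nat P
  have : ∀ a, ∃ M, ∀ p, c p < a → g p a ≤ M := by
    intro a
    have hfin : {p | c p < a}.Finite := (Set.finite_Iio a).preimage hc.injOn
    obtain ⟨M, hM⟩ := (hfin.image (fun p => g p a)).bddAbove
    exact ⟨M, fun p hp => hM ⟨p, hp, rfl⟩⟩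
  choose h hh using this
  exact ⟨h, fun p => (eventually_gt_atTop (c p)).mono fun a ha => hh a p ha⟩

lemma exists_forall₂ {A B : Type*} {R : A → B → Prop} (u : List A) (h : ∀ v ∈ u, ∃ q, R v q) :
    ∃ t, List.Forall₂ R u t := by
  induction u with
  | nil => exact ⟨[], .nil⟩
  | cons a u ih =>
    obtain ⟨q, hq⟩ := h a (by simp)
    obtain ⟨t, ht⟩ := ih fun v hv => h v (by simp [hv])
    exact ⟨q :: t, .cons hq ht⟩

section Games

variable {𝒲 : Type} [NormedAddCommGroup 𝒲] [NormedSpace ℝ 𝒲] {𝔽 : Subfield ℝ}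

def Comb (n : ℕ) (S T : ℕ → (ℕ →₀ 𝔽)) (p q : ℕ →₀ 𝔽) : Prop :=
  ∃ c : ℕ → 𝔽, p = ∑ i ∈ Finset.range n, c i • S i ∧ q = ∑ i ∈ Finset.range n, c i • T i

noncomputable abbrev gd (l : List (ℕ →₀ 𝔽)) : ℕ → (ℕ →₀ 𝔽) := fun i => l.getD i 0

lemma gd_append_left (l l' : List (ℕ →₀ 𝔽)) {i : ℕ} (h : i < l.length) :
    gd (l ++ l') i = gd l i := by
  simp [gd, List.getElem?_append_left h]

lemma Comb.symm {n : ℕ} {S T : ℕ → (ℕ →₀ 𝔽)} {p q : ℕ →₀ 𝔽} (h : Comb n S T p q) :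
    Comb n T S q p := by
  obtain ⟨c, h1, h2⟩ := h
  exact ⟨c, h2, h1⟩

lemma Comb.mono {n n' : ℕ} {S S' T T' : ℕ → (ℕ →₀ 𝔽)} {p q : ℕ →₀ 𝔽} (h : Comb n S T p q)
    (hn : n ≤ n') (hS : ∀ i < n, S' i = S i) (hT : ∀ i < n, T' i = T i) : Comb n' S' T' p q := by
  obtain ⟨c, h1, h2⟩ := h
  refine ⟨fun i => if i < n then c i else 0, ?_, ?_⟩
  · rw [h1]
    rw [← Finset.sum_subset (Finset.range_mono hn)]
    · exact Finset.sum_congr rfl fun i hi => by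
        have := Finset.mem_range.1 hi
        simp [this, hS i this]
    · intro i _ hi
      simp [show ¬ i < n by simpa using hi]
  · rw [h2]
    rw [← Finset.sum_subset (Finset.range_mono hn)]
    · exact Finset.sum_congr rfl fun i hi => by
        have := Finset.mem_range.1 hi
        simp [this, hT i this]
    · intro i _ hi
      simp [show ¬ i < n by simpa using hi]

lemma Comb.right_mem {n : ℕ} {S T : ℕ → (ℕ →₀ 𝔽)} {p q : ℕ →₀ 𝔽} (h : Comb n S T p q)
    (Z : Submodule 𝔽 (ℕ →₀ 𝔽)) (hT : ∀ i < n, T i ∈ Z) : q ∈ Z := by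
  obtain ⟨c, -, rfl⟩ := h
  exact Submodule.sum_mem _ fun i hi => Z.smul_mem _ (hT i (Finset.mem_range.1 hi))

lemma seqEquiv_symm {K : ℝ} (hK : 0 < K) {n : ℕ} {x y : ℕ → 𝒲} (h : SeqEquiv K n x y) :
    SeqEquiv K n y x := by
  intro a
  obtain ⟨h1, h2⟩ := h a
  rw [one_div, inv_mul_le_iff₀ hK] at *
  exact ⟨h2, h1⟩

lemma seqEquiv_trans {K L : ℝ} (hK : 0 < K) (hL : 0 < L) {n : ℕ} {x y z : ℕ → 𝒲}
    (h : SeqEquiv K n x y) (h' : SeqEquiv L n y z) : SeqEquiv (K * L) n x z := by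
  intro a
  obtain ⟨h1, h2⟩ := h a
  obtain ⟨h3, h4⟩ := h' a
  rw [one_div, inv_mul_le_iff₀ (by positivity)] at *
  constructor
  · calc _ ≤ _ := h1
      _ ≤ K * (L * _) := by gcongr
      _ = _ := by ring
  · calc _ ≤ _ := h4
      _ ≤ L * (K * _) := by gcongr
      _ = _ := by ring

lemma seqEquiv_congr {K : ℝ} {n : ℕ} {x y x' y' : ℕ → 𝒲} (h : SeqEquiv K n x y)
    (hx : ∀ i < n, x' i = x i) (hy : ∀ i < n, y' i = y i) : SeqEquiv K n x' y' := by
  intro a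
  have e1 : ∑ i ∈ Finset.range n, a i • x' i = ∑ i ∈ Finset.range n, a i • x i :=
    Finset.sum_congr rfl fun i hi => by rw [hx i (Finset.mem_range.1 hi)]
  have e2 : ∑ i ∈ Finset.range n, a i • y' i = ∑ i ∈ Finset.range n, a i • y i :=
    Finset.sum_congr rfl fun i hi => by rw [hy i (Finset.mem_range.1 hi)]
  rw [e1, e2]
  exact h a

variable (φ : (ℕ →₀ 𝔽) →ₗ[𝔽] 𝒲)

lemma seqEquiv_comb {K : ℝ} {n m : ℕ} {S T P Q : ℕ → (ℕ →₀ 𝔽)}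
    (h : SeqEquiv K n (fun i => φ (S i)) (fun i => φ (T i)))
    (hc : ∀ i < m, Comb n S T (P i) (Q i)) :
    SeqEquiv K m (fun i => φ (P i)) (fun i => φ (Q i)) := by
  have : ∀ i, ∃ c : ℕ → 𝔽, i < m →
      (P i = ∑ j ∈ Finset.range n, c j • S j ∧ Q i = ∑ j ∈ Finset.range n, c j • T j) := by
    intro i
    by_cases hi : i < m
    · obtain ⟨c, hc⟩ := hc i hi
      exact ⟨c, fun _ => hc⟩
    · exact ⟨0, fun h => absurd h hi⟩
  choose c hc using this
  intro a
  have e1 : ∑ i ∈ Finset.range m, a i • φ (P i) =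
      ∑ j ∈ Finset.range n, (∑ i ∈ Finset.range m, a i * (c i j : ℝ)) • φ (S j) := by
    simp_rw [Finset.sum_smul]
    rw [Finset.sum_comm]
    refine Finset.sum_congr rfl fun i hi => ?_
    rw [(hc i (Finset.mem_range.1 hi)).1, map_sum, Finset.smul_sum]
    refine Finset.sum_congr rfl fun j _ => ?_
    rw [map_smul, mul_smul]; rfl
  have e2 : ∑ i ∈ Finset.range m, a i • φ (Q i) =
      ∑ j ∈ Finset.range n, (∑ i ∈ Finset.range m, a i * (c i j : ℝ)) • φ (T j) := by
    simp_rw [Finset.sum_smul]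
    rw [Finset.sum_comm]
    refine Finset.sum_congr rfl fun i hi => ?_
    rw [(hc i (Finset.mem_range.1 hi)).2, map_sum, Finset.smul_sum]
    refine Finset.sum_congr rfl fun j _ => ?_
    rw [map_smul, mul_smul]; rfl
  rw [e1, e2]
  exact h _

/-- Equivalence of lists of vectors. -/
def EE (K : ℝ) (s t : List (ℕ →₀ 𝔽)) : Prop :=
  SeqEquiv K s.length (fun i => φ (gd s i)) (fun i => φ (gd t i))

/-- The embedding tree, on the level of coordinate vectors. -/
def TV (y : ℕ → (ℕ →₀ 𝔽)) (Z : Submodule 𝔽 (ℕ →₀ 𝔽)) (K : ℝ) : Set (List (ℕ →₀ 𝔽)) :=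
  {l | (∀ v ∈ l, v ∈ Z) ∧ SeqEquiv K l.length (fun i => φ (gd l i)) (fun i => φ (y i))}

lemma gd_mem {l : List (ℕ →₀ 𝔽)} {Z : Submodule 𝔽 (ℕ →₀ 𝔽)} (h : ∀ v ∈ l, v ∈ Z) (i : ℕ) :
    gd l i ∈ Z := by
  by_cases hi : i < l.length
  · have : gd l i = l[i] := by simp [gd, hi]
    rw [this]; exact h _ (List.getElem_mem hi)
  · have : gd l i = 0 := by simp [gd, not_lt.1 hi]
    rw [this]; exact Z.zero_mem

lemma comb_gd {R : (ℕ →₀ 𝔽) → (ℕ →₀ 𝔽) → Prop} {s t : List (ℕ →₀ 𝔽)}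
    (h : List.Forall₂ R s t) {i : ℕ} (hi : i < s.length) : R (gd s i) (gd t i) := by
  have h2 : i < t.length := h.length_eq ▸ hi
  have := (List.forall₂_iff_get.1 h).2 i hi h2
  simpa [gd, hi, h2] using this

lemma eventually_span {S : ℕ → (ℕ →₀ 𝔽)} {v : ℕ →₀ 𝔽}
    (h : v ∈ Submodule.span 𝔽 (Set.range S)) :
    ∀ᶠ n in atTop, ∃ c : ℕ → 𝔽, v = ∑ i ∈ Finset.range n, c i • S i := by
  obtain ⟨c, rfl⟩ := (Finsupp.mem_span_range_iff_exists_finsupp).1 h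
  filter_upwards [eventually_gt_atTop (c.support.sup id)] with n hn
  refine ⟨c, ?_⟩
  rw [Finsupp.sum]
  refine Finset.sum_subset ?_ ?_
  · intro i hi
    have : i ≤ c.support.sup id := Finset.le_sup (f := id) hi
    exact Finset.mem_range.2 (this.trans_lt hn)
  · intro i _ hi
    simp [Finsupp.notMem_support_iff.1 hi]

lemma eventually_span_J {S : ℕ → (ℕ →₀ 𝔽)} {J : Set ℕ} {v : ℕ →₀ 𝔽}
    (h : v ∈ Submodule.span 𝔽 (S '' J)) :
    ∀ᶠ a in atTop, v ∈ Submodule.span 𝔽 (S '' (J ∩ Set.Iio a)) := by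
  induction h using Submodule.span_induction with
  | mem x hx =>
    obtain ⟨j, hj, rfl⟩ := hx
    filter_upwards [eventually_gt_atTop j] with a ha
    exact Submodule.subset_span ⟨j, ⟨hj, ha⟩, rfl⟩
  | zero => exact Eventually.of_forall fun a => Submodule.zero_mem _
  | add x y _ _ hx hy =>
    filter_upwards [hx, hy] with a h1 h2 using Submodule.add_mem _ h1 h2
  | smul c x _ hx => filter_upwards [hx] with a h1 using Submodule.smul_mem _ _ h1

lemma eventually_list {A : Type*} {p : A → ℕ → Prop} (u : List A)
    (h : ∀ v ∈ u, ∀ᶠ n in atTop, p v n) : ∀ᶠ n in atTop, ∀ v ∈ u, p v n := by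
  induction u with
  | nil => simp
  | cons a u ih =>
    filter_upwards [h a (by simp), ih fun v hv => h v (by simp [hv])] with n h1 h2
    simpa using ⟨h1, h2⟩

/-- The list `x b, …, x (a-1)`. -/
def xs (x : ℕ → (ℕ →₀ 𝔽)) (b a : ℕ) : List (ℕ →₀ 𝔽) := (List.range' b (a - b)).map x

lemma mem_xs {x : ℕ → (ℕ →₀ 𝔽)} {b a : ℕ} {v : ℕ →₀ 𝔽} :
    v ∈ xs x b a ↔ ∃ j, b ≤ j ∧ j < a ∧ x j = v := by
  simp only [xs, List.mem_map, List.mem_range'_1]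
  constructor
  · rintro ⟨j, h, rfl⟩; exact ⟨j, h.1, by omega, rfl⟩
  · rintro ⟨j, h1, h2, rfl⟩; exact ⟨j, by omega, rfl⟩

/-- The consequence of the failure of tightness. -/
def Hyp (x y : ℕ → (ℕ →₀ 𝔽)) (α : Ordinal.{0}) (K : ℝ) : Prop :=
  ∀ (n₀ : ℕ) (h : ℕ → ℕ), ∃ J : Set ℕ, (∀ j ∈ J, n₀ ≤ j) ∧
    (∃ᶠ a in atTop, ∀ j ∈ J, j < a ∨ h a ≤ j) ∧
    RR (TV φ y (Submodule.span 𝔽 (x '' J)) K) (Ordinal.omega0 * α) []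

variable {φ}

lemma not_BB [Countable 𝔽] {x y : ℕ → (ℕ →₀ 𝔽)} {m : ℕ → ℕ} (hx : Blk x m) {α : Ordinal.{0}}
    (hα : (Set.Iic α).Countable) {K : ℝ} (hK : 0 < K)
    (hyB : Big (Submodule.span 𝔽 (Set.range y)))
    (hyX : Submodule.span 𝔽 (Set.range y) ≤ Submodule.span 𝔽 (Set.range x))
    (hH : Hyp φ x y α K) : ¬ BB (EE φ K) (Submodule.span 𝔽 (Set.range x)) α [] [] [] := by
  intro hB
  set X := Submodule.span 𝔽 (Set.range x) with hXdef
  have hstr : ∀ (ξ : Ordinal.{0}) (s t f : LV 𝔽), ∃ (u : LV 𝔽) (ξ' : Ordinal.{0}) (n : ℕ),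
      BB (EE φ K) X ξ s t f → (∀ v ∈ u, v ∈ Submodule.span 𝔽 (Set.range y)) ∧ ξ' < ξ ∧
      ∀ f' t' : LV 𝔽, (∀ v ∈ f', v ∈ X ⊓ Wt 𝔽 n) →
        (∀ v ∈ t', v ∈ Submodule.span 𝔽 {w | w ∈ f ++ f'}) → t'.length = u.length →
        EE φ K (s ++ u) (t ++ t') → BB (EE φ K) X ξ' (s ++ u) (t ++ t') (f ++ f') := by
    intro ξ s t f
    by_cases h : BB (EE φ K) X ξ s t f
    · have h' := h
      rw [BB] at h'
      obtain ⟨u, hu, ξ', hξ', n, hn⟩ := h' _ hyB hyX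
      exact ⟨u, ξ', n, fun _ => ⟨hu, hξ', hn⟩⟩
    · exact ⟨[], 0, 0, fun h' => absurd h' h⟩
  choose U Ξ N hstr using hstr
  have := hα.to_subtype
  obtain ⟨h, hh⟩ := exists_dom
    (fun (p : Set.Iic α × LV 𝔽 × LV 𝔽 × LV 𝔽 × ℕ) (a : ℕ) =>
      N p.1.1 p.2.1 p.2.2.1 (p.2.2.2.1 ++ xs x p.2.2.2.2 a))
  obtain ⟨J, hJ₀, hJ, hR⟩ := hH (N α [] [] []) h
  have claim : ∀ ξ : Ordinal.{0}, ξ ≤ α → ∀ s t f l : LV 𝔽, BB (EE φ K) X ξ s t f →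
      List.Forall₂ (Comb l.length y (gd l)) s t →
      RR (TV φ y (Submodule.span 𝔽 (x '' J)) K) (Ordinal.omega0 * ξ) l →
      (∀ j ∈ J, x j ∈ f ∨ N ξ s t f ≤ j) → False := by
    intro ξ
    induction ξ using WellFoundedLT.induction with
    | ind ξ ih =>
      intro hξ s t f l hBB hst hRl hf
      obtain ⟨hu, hξ', hnext⟩ := hstr ξ s t f hBB
      set u := U ξ s t f
      set ξ' := Ξ ξ s t f
      set b := N ξ s t f with hb
      obtain ⟨r, hr⟩ := eventually_atTop.1 (eventually_list u fun v hv => eventually_span (hu v hv))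
      obtain ⟨l', hl', hRl'⟩ := hRl.extend_omega hξ' r
      have hlen : r ≤ (l ++ l').length := by simp [hl']
      obtain ⟨t', ht'⟩ := exists_forall₂ (R := Comb (l ++ l').length y (gd (l ++ l'))) u
        (fun v hv => by
          obtain ⟨c, hc⟩ := hr _ hlen v hv
          exact ⟨_, c, hc, rfl⟩)
      have hst' : List.Forall₂ (Comb (l ++ l').length y (gd (l ++ l'))) (s ++ u) (t ++ t') :=
        List.rel_append (hst.imp fun p q hpq => hpq.mono (by simp) (fun _ _ => rfl)
          (fun i hi => gd_append_left _ _ hi)) ht'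
      have hmem := hRl'.mem
      have ht'Z : ∀ v ∈ t', v ∈ Submodule.span 𝔽 (x '' J) := by
        intro v hv
        obtain ⟨i, hi, rfl⟩ := List.getElem_of_mem hv
        have h1 := comb_gd ht' (ht'.length_eq ▸ hi : i < u.length)
        have h2 := h1.right_mem _ (fun i _ => gd_mem hmem.1 i)
        simpa [gd, hi] using h2
      have ev1 := eventually_list t' fun v hv => eventually_span_J (ht'Z v hv)
      have ev2 := hh ⟨⟨ξ', hξ'.le.trans hξ⟩, s ++ u, t ++ t', f, b⟩
      obtain ⟨a, ha, ha1, ha2⟩ := (hJ.and_eventually (ev1.and ev2)).exists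
      have hEE : EE φ K (s ++ u) (t ++ t') :=
        seqEquiv_comb φ (seqEquiv_symm hK hmem.2) fun i hi => comb_gd hst' hi
      have hfa : ∀ j ∈ J, j < a → x j ∈ f ++ xs x b a := by
        intro j hj hja
        rcases hf j hj with h1 | h1
        · simp [h1]
        · exact List.mem_append_right _ (mem_xs.2 ⟨j, h1, hja, rfl⟩)
      refine ih ξ' hξ' (hξ'.le.trans hξ) (s ++ u) (t ++ t') (f ++ xs x b a) (l ++ l')
        (hnext _ _ ?_ ?_ ht'.length_eq.symm hEE) hst' hRl' ?_
      · intro v hv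
        obtain ⟨j, h1, -, rfl⟩ := mem_xs.1 hv
        exact ⟨Submodule.subset_span ⟨j, rfl⟩, hx.le_m h1⟩
      · intro v hv
        refine Submodule.span_mono ?_ (ha1 v hv)
        rintro _ ⟨j, ⟨hj, hja⟩, rfl⟩
        exact hfa j hj hja
      · intro j hj
        rcases ha j hj with h1 | h1
        · exact Or.inl (hfa j hj h1)
        · exact Or.inr (ha2.trans h1)
  exact claim α le_rfl [] [] [] [] hB .nil hR fun j hj => Or.inr (hJ₀ j hj)

lemma RR_of_GG [Countable 𝔽] {x y z : ℕ → (ℕ →₀ 𝔽)} {m : ℕ → ℕ} (hx : Blk x m) {α : Ordinal.{0}}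
    (hα : (Set.Iic α).Countable) {K : ℝ} (hK : 0 < K)
    (hH : Hyp φ x y α K) (hG : GG (EE φ K) (Submodule.span 𝔽 (Set.range x)) α [] [] [])
    {Y : Submodule 𝔽 (ℕ →₀ 𝔽)} (hYB : Big Y) (hYX : Y ≤ Submodule.span 𝔽 (Set.range x))
    (hz : ∀ n, z n ∈ Submodule.span 𝔽 (Set.range y)) :
    RR (TV φ z Y (K * K)) α [] := by
  set X := Submodule.span 𝔽 (Set.range x) with hXdef
  have hstr : ∀ (ξ : Ordinal.{0}) (s t f : LV 𝔽), ∃ n : ℕ, GG (EE φ K) X ξ s t f →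
      ∀ u : LV 𝔽, (∀ v ∈ u, v ∈ X ⊓ Wt 𝔽 n) →
      ∀ ξ' : Ordinal.{0}, ξ' < ξ → HG (EE φ K) X (GG (EE φ K) X ξ') s t f u := by
    intro ξ s t f
    by_cases h : GG (EE φ K) X ξ s t f
    · have h' := h
      rw [GG] at h'
      obtain ⟨n, hn⟩ := h'
      exact ⟨n, fun _ => hn⟩
    · exact ⟨0, fun h' => absurd h' h⟩
  choose N hN using hstr
  have hrep : ∀ (ξ ξ' : Ordinal.{0}) (s t f u : LV 𝔽), ∃ f' t' : LV 𝔽,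
      HG (EE φ K) X (GG (EE φ K) X ξ') s t f u → (∀ v ∈ f', v ∈ Y) ∧
      (∀ v ∈ t', v ∈ Submodule.span 𝔽 {w | w ∈ f ++ f'}) ∧ t'.length = u.length ∧
      EE φ K (s ++ u) (t ++ t') ∧ GG (EE φ K) X ξ' (s ++ u) (t ++ t') (f ++ f') := by
    intro ξ ξ' s t f u
    by_cases h : HG (EE φ K) X (GG (EE φ K) X ξ') s t f u
    · obtain ⟨f', t', h'⟩ := h Y hYB hYX
      exact ⟨f', t', fun _ => h'⟩
    · exact ⟨[], [], fun h' => absurd h' h⟩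
  choose F' T' hrep using hrep
  have := hα.to_subtype
  obtain ⟨h, hh⟩ := exists_dom
    (fun (p : Set.Iic α × Set.Iic α × LV 𝔽 × LV 𝔽 × LV 𝔽 × ℕ) (a : ℕ) =>
      N p.2.1.1 (p.2.2.1 ++ xs x p.2.2.2.2.2 a)
        (p.2.2.2.1 ++ T' p.1.1 p.2.1.1 p.2.2.1 p.2.2.2.1 p.2.2.2.2.1 (xs x p.2.2.2.2.2 a))
        (p.2.2.2.2.1 ++ F' p.1.1 p.2.1.1 p.2.2.1 p.2.2.2.1 p.2.2.2.2.1 (xs x p.2.2.2.2.2 a)))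
  obtain ⟨J, hJ₀, hJ, hR⟩ := hH (N α [] [] []) h
  have claim : ∀ ξ : Ordinal.{0}, ξ ≤ α → ∀ s t f ly l : LV 𝔽, GG (EE φ K) X ξ s t f →
      EE φ K s t → s.length = t.length → (∀ v ∈ f, v ∈ Y) → (∀ v ∈ t, v ∈ Y) →
      RR (TV φ y (Submodule.span 𝔽 (x '' J)) K) (Ordinal.omega0 * ξ) ly →
      (∀ i < l.length, ∃ q, Comb ly.length y (gd ly) (z i) q ∧
        Comb s.length (gd s) (gd t) q (gd l i)) →
      (∀ v ∈ l, v ∈ Y) → (∀ j ∈ J, x j ∈ s ∨ N ξ s t f ≤ j) → RR (TV φ z Y (K * K)) ξ l := by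
    intro ξ
    induction ξ using WellFoundedLT.induction with
    | ind ξ ih =>
      intro hξ s t f ly l hGG hEE hlen hfY htY hRy hl hlY hs
      rw [RR]
      refine ⟨⟨hlY, ?_⟩, fun ξ' hξ' => ?_⟩
      · have : ∀ i, ∃ q, i < l.length → Comb ly.length y (gd ly) (z i) q ∧
            Comb s.length (gd s) (gd t) q (gd l i) := by
          intro i
          by_cases hi : i < l.length
          · obtain ⟨q, hq⟩ := hl i hi
            exact ⟨q, fun _ => hq⟩
          · exact ⟨0, fun h => absurd h hi⟩
        choose q hq using this
        have h1 := seqEquiv_comb φ (m := l.length) (P := q) (Q := z) hRy.mem.2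
          fun i hi => (hq i hi).1.symm
        have h2 := seqEquiv_comb φ (m := l.length) (P := q) (Q := gd l) hEE
          fun i hi => (hq i hi).2
        exact seqEquiv_trans hK hK (seqEquiv_symm hK h2) h1
      · obtain ⟨r, hr⟩ := eventually_atTop.1 (eventually_span (hz l.length))
        obtain ⟨l', hl', hRy'⟩ := hRy.extend_omega hξ' r
        have hlen' : r ≤ (ly ++ l').length := by simp [hl']
        obtain ⟨c, hc⟩ := hr _ hlen'
        set q := ∑ i ∈ Finset.range (ly ++ l').length, c i • gd (ly ++ l') i with hq
        have hcq : Comb (ly ++ l').length y (gd (ly ++ l')) (z l.length) q := ⟨c, hc, rfl⟩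
        have hqZ : q ∈ Submodule.span 𝔽 (x '' J) :=
          hcq.right_mem _ fun i _ => gd_mem hRy'.mem.1 i
        set b := N ξ s t f with hb
        have ev2 := hh ⟨⟨ξ, hξ⟩, ⟨ξ', hξ'.le.trans hξ⟩, s, t, f, b⟩
        obtain ⟨a, ha, ha1, ha2⟩ := (hJ.and_eventually ((eventually_span_J hqZ).and ev2)).exists
        dsimp only at ha2
        set u := xs x b a with hu
        have huX : ∀ v ∈ u, v ∈ X ⊓ Wt 𝔽 b := by
          intro v hv
          obtain ⟨j, h1, -, rfl⟩ := mem_xs.1 hv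
          exact ⟨Submodule.subset_span ⟨j, rfl⟩, hx.le_m h1⟩
        obtain ⟨hf', ht', htl, hE', hG'⟩ := hrep ξ ξ' s t f u (hN ξ s t f hGG u huX ξ' hξ')
        set f' := F' ξ ξ' s t f u
        set t' := T' ξ ξ' s t f u
        have hfY' : ∀ v ∈ f ++ f', v ∈ Y := by
          intro v hv
          rcases List.mem_append.1 hv with h | h
          exacts [hfY v h, hf' v h]
        have htY' : ∀ v ∈ t ++ t', v ∈ Y := by
          intro v hv
          rcases List.mem_append.1 hv with h | h
          · exact htY v h
          · exact (Submodule.span_le.2 fun w hw => hfY' w hw) (ht' v h)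
        have hsa : ∀ j ∈ J, j < a → x j ∈ s ++ u := by
          intro j hj hja
          rcases hs j hj with h1 | h1
          · simp [h1]
          · exact List.mem_append_right _ (mem_xs.2 ⟨j, h1, hja, rfl⟩)
        have hqs : ∃ d : ℕ → 𝔽, q = ∑ i ∈ Finset.range (s ++ u).length, d i • gd (s ++ u) i := by
          have : q ∈ Submodule.span 𝔽 (Set.range fun i : Fin (s ++ u).length => gd (s ++ u) i) := by
            refine Submodule.span_mono ?_ ha1
            rintro _ ⟨j, ⟨hj, hja⟩, rfl⟩
            obtain ⟨i, hi, he⟩ := List.getElem_of_mem (hsa j hj hja)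
            exact ⟨⟨i, hi⟩, by simp only [gd]; rw [List.getD_eq_getElem _ _ hi, he]⟩
          obtain ⟨d, hd⟩ := (Submodule.mem_span_range_iff_exists_fun 𝔽).1 this
          refine ⟨fun i => if h : i < (s ++ u).length then d ⟨i, h⟩ else 0, ?_⟩
          rw [← hd, Finset.sum_range]
          exact Finset.sum_congr rfl fun i _ => by simp only [i.2, dif_pos]
        obtain ⟨d, hd⟩ := hqs
        set v := ∑ i ∈ Finset.range (s ++ u).length, d i • gd (t ++ t') i with hv
        have hcv : Comb (s ++ u).length (gd (s ++ u)) (gd (t ++ t')) q v := ⟨d, hd, rfl⟩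
        have hvY : v ∈ Y := hcv.right_mem _ fun i _ => gd_mem htY' i
        refine ⟨v, ih ξ' hξ' (hξ'.le.trans hξ) (s ++ u) (t ++ t') (f ++ f') (ly ++ l') (l ++ [v])
          hG' hE' (by simp [hlen, htl]) hfY' htY' hRy' ?_ ?_ ?_⟩
        · intro i hi
          by_cases hil : i < l.length
          · obtain ⟨q', h1, h2⟩ := hl i hil
            refine ⟨q', h1.mono (by simp) (fun _ _ => rfl) (fun i hi => gd_append_left _ _ hi), ?_⟩
            rw [gd_append_left _ _ hil]
            exact h2.mono (by simp) (fun i hi => gd_append_left _ _ hi)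
              (fun i hi => gd_append_left _ _ (hlen ▸ hi))
          · have : i = l.length := by simp at hi; omega
            subst this
            refine ⟨q, hcq, ?_⟩
            have : gd (l ++ [v]) l.length = v := by simp [gd]
            rw [this]; exact hcv
        · intro w hw
          rcases List.mem_append.1 hw with h | h
          · exact hlY w h
          · rw [List.mem_singleton.1 h]; exact hvY
        · intro j hj
          rcases ha j hj with h1 | h1
          · exact Or.inl (hsa j hj h1)
          · exact Or.inr (ha2.trans h1)
  refine claim α le_rfl [] [] [] [] [] hG ?_ rfl (by simp) (by simp) hR (by simp) (by simp)
    fun j hj => Or.inr (hJ₀ j hj)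
  intro a
  simp

end Games

end Rosendal

namespace Rosendal

lemma RR.transfer {A B : Type} {T : Set (List A)} {T' : Set (List B)} (S : A → B → Prop)
    (hT : ∀ l l', List.Forall₂ S l l' → l ∈ T → l' ∈ T')
    (hS : ∀ l ∈ T, ∀ w ∈ l, ∃ w', S w w') (β : Ordinal.{0}) :
    ∀ l l', List.Forall₂ S l l' → RR T β l → RR T' β l' := by
  induction β using WellFoundedLT.induction with
  | ind β ih =>
    intro l l' hl hR
    rw [RR]
    refine ⟨hT l l' hl hR.mem, fun γ hγ => ?_⟩
    rw [RR] at hR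
    obtain ⟨w, hw⟩ := hR.2 γ hγ
    obtain ⟨w', hw'⟩ := hS _ hw.mem w (by simp)
    exact ⟨w', ih γ hγ _ _ (List.rel_append hl (.cons hw' .nil)) hw⟩

section Rank
variable {A : Type} (T : Set (List A))

/-- The extension relation on a tree. -/
def TR : T → T → Prop := fun t s => s.val <+: t.val ∧ s.val ≠ t.val

variable {T}
lemma TR_step {s t : T} (hP : ∀ l w, l ++ w ∈ T → l ∈ T) (h : TR T t s) :
    ∃ (w : A) (hw : s.val ++ [w] ∈ T), t = ⟨_, hw⟩ ∨ TR T t ⟨s.val ++ [w], hw⟩ := by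
  obtain ⟨⟨l, hl⟩, h2⟩ := h
  cases l with
  | nil => simp at hl; exact absurd hl h2
  | cons w l =>
    have hw : s.val ++ [w] ∈ T := hP _ l (by
      have := t.2
      rw [← hl] at this
      simpa using this)
    refine ⟨w, hw, ?_⟩
    by_cases hl' : l = []
    · left
      apply Subtype.ext
      simp [← hl, hl']
    · right
      refine ⟨⟨l, by simp [← hl]⟩, ?_⟩
      simp only [← hl]
      simpa using Ne.symm hl'

lemma TR_snoc {s : T} {w : A} (hw : s.val ++ [w] ∈ T) : TR T ⟨s.val ++ [w], hw⟩ s :=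
  ⟨⟨[w], rfl⟩, by simp⟩

lemma RR_of_not_acc (hP : ∀ l w, l ++ w ∈ T → l ∈ T) (β : Ordinal.{0}) :
    ∀ s : T, ¬ Acc (TR T) s → RR T β s.val := by
  induction β using WellFoundedLT.induction with
  | ind β ih =>
    intro s hs
    rw [RR]
    refine ⟨s.2, fun γ hγ => ?_⟩
    have : ∃ t, TR T t s ∧ ¬ Acc (TR T) t := by
      by_contra! hc
      exact hs ⟨_, hc⟩
    obtain ⟨t, ht, hta⟩ := this
    obtain ⟨w, hw, h⟩ := TR_step hP ht
    refine ⟨w, ih γ hγ ⟨_, hw⟩ fun hacc => hta ?_⟩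
    rcases h with h | h
    · rw [h]; exact hacc
    · exact hacc.inv h

lemma RR_of_le_rank (hP : ∀ l w, l ++ w ∈ T → l ∈ T) (β : Ordinal.{0}) :
    ∀ (s : T) (h : Acc (TR T) s), β ≤ h.rank → RR T β s.val := by
  induction β using WellFoundedLT.induction with
  | ind β ih =>
    intro s hs hle
    rw [RR]
    refine ⟨s.2, fun γ hγ => ?_⟩
    have h1 := hγ.trans_le hle
    rw [Acc.rank_eq, Ordinal.lt_iSup_iff] at h1
    obtain ⟨⟨t, ht⟩, h1⟩ := h1
    rw [Order.lt_succ_iff] at h1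
    obtain ⟨w, hw, h⟩ := TR_step hP ht
    refine ⟨w, ih γ hγ ⟨_, hw⟩ (hs.inv (TR_snoc hw)) ?_⟩
    rcases h with h | h
    · subst h; exact h1
    · exact h1.trans (Acc.rank_lt_of_rel _ h).le

lemma le_rank_of_RR (β : Ordinal.{0}) :
    ∀ (s : T) (h : Acc (TR T) s), RR T β s.val → β ≤ h.rank := by
  induction β using WellFoundedLT.induction with
  | ind β ih =>
    intro s hs hR
    refine le_of_forall_lt fun γ hγ => ?_
    rw [RR] at hR
    obtain ⟨w, hw⟩ := hR.2 γ hγ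
    have h1 := ih γ hγ ⟨_, hw.mem⟩ (hs.inv (TR_snoc hw.mem)) hw
    exact h1.trans_lt (Acc.rank_lt_of_rel _ (TR_snoc hw.mem))
end Rank

variable {𝒲 : Type}

lemma lt_treeRank_iff {T : Set (List 𝒲)} (h0 : [] ∈ T) (hP : ∀ l w, l ++ w ∈ T → l ∈ T)
    (β : Ordinal.{0}) : (β : WithTop Ordinal.{0}) < treeRank T ↔ RR T β [] := by
  unfold treeRank
  split_ifs with h
  · rw [WithTop.coe_lt_coe, Ordinal.lt_iSup_iff]
    constructor
    · rintro ⟨s, hs⟩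
      rw [Order.lt_succ_iff] at hs
      refine RR_of_le_rank hP β ⟨[], h0⟩ (h.apply _) ?_
      by_cases hsn : s.val = []
      · have : s = ⟨[], h0⟩ := Subtype.ext hsn
        rw [← this]; exact hs
      · exact hs.trans (Acc.rank_lt_of_rel _ (r := TR T) ⟨List.nil_prefix, Ne.symm hsn⟩).le
    · intro hR
      exact ⟨⟨[], h0⟩, Order.lt_succ_iff.2 (le_rank_of_RR β ⟨[], h0⟩ (h.apply _) hR)⟩
  · simp only [WithTop.coe_lt_top, true_iff]
    have : ∃ s, ¬ Acc (TR T) s := by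
      by_contra! hc
      exact h ⟨hc⟩
    obtain ⟨s, hs⟩ := this
    refine RR_of_not_acc hP β ⟨[], h0⟩ fun hacc => hs ?_
    by_cases hsn : s.val = []
    · have : s = ⟨[], h0⟩ := Subtype.ext hsn
      rw [this]; exact hacc
    · exact hacc.inv ⟨List.nil_prefix, Ne.symm hsn⟩

variable [NormedAddCommGroup 𝒲] [NormedSpace ℝ 𝒲]

lemma seqEquiv_le {K : ℝ} {n n' : ℕ} (hn : n' ≤ n) {x y : ℕ → 𝒲} (h : SeqEquiv K n x y) :
    SeqEquiv K n' x y := by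
  intro a
  have e : ∀ x : ℕ → 𝒲, ∑ i ∈ Finset.range n, (if i < n' then a i else 0) • x i
      = ∑ i ∈ Finset.range n', a i • x i := by
    intro x
    rw [← Finset.sum_subset (Finset.range_mono hn)]
    · exact Finset.sum_congr rfl fun i hi => by simp [Finset.mem_range.1 hi]
    · intro i _ hi
      simp [show ¬ i < n' by simpa using hi]
  have := h fun i => if i < n' then a i else 0
  rwa [e, e] at this

lemma embTree_prefix (x : ℕ → 𝒲) (Y : Set 𝒲) (K : ℝ) (l w : List 𝒲)
    (h : l ++ w ∈ embTree x Y K) : l ∈ embTree x Y K := by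
  refine ⟨fun v hv => h.1 v (by simp [hv]), ?_⟩
  have h2 := seqEquiv_le (n' := l.length) (by simp) h.2
  exact seqEquiv_congr h2 (fun i hi => by simp [List.getElem?_append_left hi]) fun _ _ => rfl

lemma embTree_nil_s18 (x : ℕ → 𝒲) (Y : Set 𝒲) (K : ℝ) : [] ∈ embTree x Y K :=
  ⟨by simp, fun a => by simp⟩

lemma lt_embIndex_iff (x : ℕ → 𝒲) (Y : Set 𝒲) (β : Ordinal.{0}) :
    (β : WithTop Ordinal.{0}) < embIndex x Y ↔ ∃ K : ℝ, 1 ≤ K ∧ RR (embTree x Y K) β [] := by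
  have key : ∀ K, (β : WithTop Ordinal.{0}) < treeRank (embTree x Y K) ↔
      RR (embTree x Y K) β [] := fun K =>
    lt_treeRank_iff (embTree_nil_s18 x Y K) (embTree_prefix x Y K) β
  simp_rw [← key]
  unfold embIndex
  split_ifs with h
  · obtain ⟨K, h1, h2⟩ := h
    simp only [WithTop.coe_lt_top, true_iff]
    exact ⟨K, h1, by rw [h2]; exact WithTop.coe_lt_top _⟩
  · rw [WithTop.coe_lt_coe]
    have hb : BddAbove {o : Ordinal.{0} | ∃ K : ℝ, 1 ≤ K ∧
      (o : WithTop Ordinal) = treeRank (embTree x Y K)} := by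
      have hsub : {o : Ordinal.{0} | ∃ K : ℝ, 1 ≤ K ∧
          (o : WithTop Ordinal) = treeRank (embTree x Y K)} ⊆
          Set.range fun K : ℝ => (treeRank (embTree x Y K)).untopD 0 := by
        rintro o ⟨K, -, hK⟩
        exact ⟨K, by simp [← hK]⟩
      exact Ordinal.bddAbove_of_small.mono hsub
    have hne : {o : Ordinal.{0} | ∃ K : ℝ, 1 ≤ K ∧
      (o : WithTop Ordinal) = treeRank (embTree x Y K)}.Nonempty := by
      have h1 : treeRank (embTree x Y 1) ≠ ⊤ := fun hh => h ⟨1, le_rfl, hh⟩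
      obtain ⟨o, ho⟩ := WithTop.ne_top_iff_exists.1 h1
      exact ⟨o, 1, le_rfl, ho⟩
    rw [lt_csSup_iff hb hne]
    constructor
    · rintro ⟨o, ⟨K, hK, ho⟩, hlt⟩
      exact ⟨K, hK, by rw [← ho]; exact WithTop.coe_lt_coe.2 hlt⟩
    · rintro ⟨K, hK, hlt⟩
      have h1 : treeRank (embTree x Y K) ≠ ⊤ := fun hh => h ⟨K, hK, hh⟩
      obtain ⟨o, ho⟩ := WithTop.ne_top_iff_exists.1 h1
      exact ⟨o, ⟨K, hK, ho⟩, by rw [← ho] at hlt; exact WithTop.coe_lt_coe.1 hlt⟩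

variable {𝔽 : Subfield ℝ} (φ : (ℕ →₀ 𝔽) →ₗ[𝔽] 𝒲)

lemma seqEquiv_mono {K L : ℝ} (hK : 0 < K) (hKL : K ≤ L) {n : ℕ} {x y : ℕ → 𝒲}
    (h : SeqEquiv K n x y) : SeqEquiv L n x y := by
  intro a
  obtain ⟨h1, h2⟩ := h a
  refine ⟨le_trans ?_ h1, h2.trans ?_⟩
  · gcongr
  · gcongr

lemma RR_embTree_to_TV {y : ℕ → (ℕ →₀ 𝔽)} {Z : Submodule 𝔽 (ℕ →₀ 𝔽)} {K L : ℝ} (hK : 0 < K)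
    (hKL : K ≤ L) {β : Ordinal.{0}}
    (h : RR (embTree (fun i => φ (y i)) (φ '' Z) K) β []) : RR (TV φ y Z L) β [] := by
  refine RR.transfer (fun w v => v ∈ Z ∧ φ v = w) ?_ ?_ β [] [] .nil h
  · intro l l' hl hT
    refine ⟨fun v hv => ?_, ?_⟩
    · obtain ⟨i, hi, rfl⟩ := List.getElem_of_mem hv
      have := (List.forall₂_iff_get.1 hl).2 i (hl.length_eq ▸ hi) hi
      exact this.1
    · rw [← hl.length_eq]
      refine seqEquiv_mono hK hKL (seqEquiv_congr hT.2 (fun i hi => ?_) fun _ _ => rfl)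
      have := (List.forall₂_iff_get.1 hl).2 i hi (hl.length_eq ▸ hi)
      have hi' : i < l'.length := hl.length_eq ▸ hi
      simpa [gd, hi, hi'] using this.2
  · intro l hl w hw
    obtain ⟨v, hv, rfl⟩ := hl.1 w hw
    exact ⟨v, hv, rfl⟩

lemma RR_TV_to_embTree {y : ℕ → (ℕ →₀ 𝔽)} {Z : Submodule 𝔽 (ℕ →₀ 𝔽)} {K : ℝ}
    {β : Ordinal.{0}} (h : RR (TV φ y Z K) β []) :
    RR (embTree (fun i => φ (y i)) (φ '' Z) K) β [] := by
  refine RR.transfer (fun v w => φ v = w) ?_ ?_ β [] [] .nil h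
  · intro l l' hl hT
    refine ⟨fun v hv => ?_, ?_⟩
    · obtain ⟨i, hi, rfl⟩ := List.getElem_of_mem hv
      have hi' : i < l.length := hl.length_eq ▸ hi
      have := (List.forall₂_iff_get.1 hl).2 i (hl.length_eq ▸ hi) hi
      exact ⟨l[i], hT.1 _ (List.getElem_mem hi'), this⟩
    · rw [← hl.length_eq]
      refine seqEquiv_congr hT.2 (fun i hi => ?_) fun _ _ => rfl
      have := (List.forall₂_iff_get.1 hl).2 i hi (hl.length_eq ▸ hi)
      have hi' : i < l'.length := hl.length_eq ▸ hi
      simpa [gd, hi, hi'] using this.symm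
  · intro l hl w hw
    exact ⟨_, rfl⟩

end Rosendal

namespace Rosendal

lemma basis_const {𝒲 : Type} [NormedAddCommGroup 𝒲] [NormedSpace ℝ 𝒲] [CompleteSpace 𝒲]
    {e : ℕ → 𝒲} (he : IsSchauderBasis e) :
    ∃ C : ℝ, 0 ≤ C ∧ ∀ (a : ℕ → ℝ) (n m : ℕ), n ≤ m →
      ‖∑ i ∈ Finset.range n, a i • e i‖ ≤ C * ‖∑ i ∈ Finset.range m, a i • e i‖ := by
  let ev : OnePoint ℕ → C(OnePoint ℕ, 𝒲) →L[ℝ] 𝒲 := fun p => ContinuousMap.evalCLM ℝ p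
  have hev : ∀ p g, ev p g = g p := fun _ _ => rfl
  let D : Submodule ℝ C(OnePoint ℕ, 𝒲) :=
    LinearMap.ker (ev ((0 : ℕ) : OnePoint ℕ)).toLinearMap ⊓ ⨅ n : ℕ,
      (Submodule.span ℝ {e n}).comap
        (ev ((n + 1 : ℕ) : OnePoint ℕ) - ev ((n : ℕ) : OnePoint ℕ)).toLinearMap
  have hD : ∀ g, g ∈ D ↔ g ((0 : ℕ) : OnePoint ℕ) = 0 ∧
      ∀ n : ℕ, g ((n + 1 : ℕ) : OnePoint ℕ) - g (n : OnePoint ℕ) ∈ Submodule.span ℝ {e n} := by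
    intro g
    simp [D, Submodule.mem_iInf, hev]
  have hDc : IsClosed (D : Set C(OnePoint ℕ, 𝒲)) := by
    have : (D : Set C(OnePoint ℕ, 𝒲)) = (ev ((0 : ℕ) : OnePoint ℕ)) ⁻¹' {0} ∩ ⋂ n : ℕ,
      (ev ((n + 1 : ℕ) : OnePoint ℕ) - ev ((n : ℕ) : OnePoint ℕ)) ⁻¹'
        (Submodule.span ℝ {e n} : Set 𝒲) := by
      ext g
      simp only [SetLike.mem_coe, hD, Set.mem_inter_iff, Set.mem_preimage, Set.mem_iInter, hev,
        Set.mem_singleton_iff, _root_.sub_apply]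
    rw [this]
    refine (isClosed_singleton.preimage (ContinuousLinearMap.continuous _)).inter
      (isClosed_iInter fun n => ?_)
    exact (Submodule.closed_of_finiteDimensional _).preimage (ContinuousLinearMap.continuous _)
  have : CompleteSpace D := hDc.completeSpace_coe
  have hsum : ∀ g ∈ D, ∃ a : ℕ → ℝ, ∀ n : ℕ, g (n : OnePoint ℕ) = ∑ i ∈ Finset.range n, a i • e i := by
    intro g hg
    obtain ⟨h0, h1⟩ := (hD g).1 hg
    simp_rw [Submodule.mem_span_singleton] at h1
    choose a ha using h1
    refine ⟨a, fun n => ?_⟩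
    induction n with
    | zero => simpa using h0
    | succ n ih => rw [Finset.sum_range_succ, ← ih, ha]; abel
  have hlim : ∀ g : C(OnePoint ℕ, 𝒲), Tendsto (fun n : ℕ => g (n : OnePoint ℕ)) atTop (𝓝 (g OnePoint.infty)) := by
    intro g
    exact (OnePoint.continuous_iff_from_nat _).1 g.continuous
  have hmk : ∀ (a : ℕ → ℝ) (v : 𝒲), Tendsto (fun N => ∑ i ∈ Finset.range N, a i • e i) atTop (𝓝 v) →
      ∃ g ∈ D, (∀ n : ℕ, g (n : OnePoint ℕ) = ∑ i ∈ Finset.range n, a i • e i) ∧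
        g OnePoint.infty = v := by
    intro a v h
    refine ⟨OnePoint.continuousMapMkNat (fun N => ∑ i ∈ Finset.range N, a i • e i) v h, ?_,
      fun n => rfl, rfl⟩
    rw [hD]
    refine ⟨?_, fun n => ?_⟩
    · change ∑ i ∈ Finset.range 0, a i • e i = 0
      simp
    · change ∑ i ∈ Finset.range (n + 1), a i • e i - ∑ i ∈ Finset.range n, a i • e i ∈ _
      rw [Finset.sum_range_succ, add_sub_cancel_left]
      exact Submodule.smul_mem _ _ (Submodule.mem_span_singleton_self _)
  let L : D →L[ℝ] 𝒲 := (ev OnePoint.infty).comp D.subtypeL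
  have hL : ∀ g : D, L g = g.1 OnePoint.infty := fun _ => rfl
  have hinj : LinearMap.ker L.toLinearMap = ⊥ := by
    rw [LinearMap.ker_eq_bot']
    intro g hg
    have hg : g.1 OnePoint.infty = 0 := hg
    obtain ⟨a, ha⟩ := hsum g.1 g.2
    have h1 := hlim g.1
    simp_rw [ha, hg] at h1
    have h2 : a = 0 := (he 0).unique h1 (by simp)
    apply Subtype.ext
    ext p
    induction p using OnePoint.rec with
    | infty => exact hg
    | coe n => rw [ha, h2]; simp
  have hsurj : LinearMap.range L.toLinearMap = ⊤ := by
    rw [LinearMap.range_eq_top]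
    intro v
    obtain ⟨a, ha, -⟩ := he v
    obtain ⟨g, hg, -, h2⟩ := hmk a v ha
    exact ⟨⟨g, hg⟩, h2⟩
  let E := ContinuousLinearEquiv.ofBijective L hinj hsurj
  have hE : ∀ g, E g = L g := fun _ => rfl
  refine ⟨‖(E.symm : 𝒲 →L[ℝ] D)‖, norm_nonneg _, fun a n m hnm => ?_⟩
  have e1 : ∀ N, m ≤ N → ∑ i ∈ Finset.range N, (if i < m then a i else 0) • e i =
      ∑ i ∈ Finset.range m, a i • e i := by
    intro N hN
    rw [← Finset.sum_subset (Finset.range_mono hN)]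
    · exact Finset.sum_congr rfl fun i hi => by simp [Finset.mem_range.1 hi]
    · intro i _ hi
      simp [show ¬ i < m by simpa using hi]
  obtain ⟨g, hg, h1, h2⟩ := hmk (fun i => if i < m then a i else 0)
    (∑ i ∈ Finset.range m, a i • e i)
    (tendsto_const_nhds.congr' ((eventually_ge_atTop m).mono fun N hN => (e1 N hN).symm))
  have e2 : ∑ i ∈ Finset.range n, a i • e i = g (n : OnePoint ℕ) := by
    rw [h1]
    exact Finset.sum_congr rfl fun i hi => by
      simp [(Finset.mem_range.1 hi).trans_le hnm]
  have h3 : E ⟨g, hg⟩ = ∑ i ∈ Finset.range m, a i • e i := by rw [hE, hL]; exact h2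
  have h4 := (E.symm : 𝒲 →L[ℝ] D).le_opNorm (E ⟨g, hg⟩)
  simp only [ContinuousLinearEquiv.coe_coe, ContinuousLinearEquiv.symm_apply_apply] at h4
  rw [e2, ← h3]
  exact (g.norm_coe_le_norm _).trans h4

end Rosendal

namespace Rosendal

variable {𝒲 : Type} [NormedAddCommGroup 𝒲] [NormedSpace ℝ 𝒲]

/-- `X` is basic with constant `C`. -/
def BC (X : ℕ → 𝒲) (C : ℝ) : Prop := ∀ (a : ℕ → ℝ) (n m : ℕ), n ≤ m →
  ‖∑ i ∈ Finset.range n, a i • X i‖ ≤ C * ‖∑ i ∈ Finset.range m, a i • X i‖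

lemma BC.coef {X : ℕ → 𝒲} {C : ℝ} (h : BC X C) (a : ℕ → ℝ) {j n : ℕ} (hj : j < n) :
    |a j| * ‖X j‖ ≤ 2 * C * ‖∑ i ∈ Finset.range n, a i • X i‖ := by
  have e : a j • X j = ∑ i ∈ Finset.range (j + 1), a i • X i - ∑ i ∈ Finset.range j, a i • X i := by
    rw [Finset.sum_range_succ]; abel
  rw [← Real.norm_eq_abs, ← norm_smul, e]
  refine (norm_sub_le _ _).trans ?_
  have := h a j n hj.le
  have := h a (j + 1) n hj
  linarith

lemma BC.tail {X : ℕ → 𝒲} {C : ℝ} (h : BC X C) (a : ℕ → ℝ) {d n : ℕ} (hd : d ≤ n) :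
    ‖∑ i ∈ Finset.range n, a i • X i - ∑ i ∈ Finset.range d, a i • X i‖
      ≤ (1 + C) * ‖∑ i ∈ Finset.range n, a i • X i‖ := by
  refine (norm_sub_le _ _).trans ?_
  have := h a d n hd
  linarith

open Classical in
lemma swap {X : ℕ → 𝒲} {C : ℝ} (hC : 0 ≤ C) (h : BC X C) {d p n : ℕ} (hn : p + d ≤ n)
    (lam : ℕ → ℝ) (hlam : ∀ i, |lam i| * ‖X (p + i)‖ = ‖X i‖) (P : ℕ → Prop)
    (hP : ∀ j, P j → j < d ∨ p + d ≤ j) (hP' : ∀ j < d, P j) :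
    SeqEquiv (1 + C + 2 * C * d) n (fun j => if P j then X j else 0)
      (fun j => if j < d then lam j • X (p + j) else if P j then X j else 0) := by
  intro a
  set a1 : ℕ → ℝ := fun j => if P j then a j else 0 with ha1
  set a2 : ℕ → ℝ := fun j => if j < p + d then (if p ≤ j then a (j - p) * lam (j - p) else 0)
    else a1 j with ha2
  set S1 := ∑ i ∈ Finset.range n, a1 i • X i with hS1
  set S2 := ∑ i ∈ Finset.range n, a2 i • X i with hS2
  have hdn : d ≤ n := by omega
  have e1 : ∑ i ∈ Finset.range n, a i • (if P i then X i else 0) = S1 :=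
    Finset.sum_congr rfl fun i _ => by simp only [ha1]; split_ifs <;> simp
  set H1 := ∑ i ∈ Finset.range d, a1 i • X i with hH1
  set H2 := ∑ i ∈ Finset.range (p + d), a2 i • X i with hH2
  have eH2 : H2 = ∑ i ∈ Finset.range d, (a i * lam i) • X (p + i) := by
    rw [hH2, Finset.sum_range_add, Finset.sum_eq_zero, zero_add]
    · refine Finset.sum_congr rfl fun i hi => ?_
      have := Finset.mem_range.1 hi
      simp [ha2, this]
    · intro i hi
      have := Finset.mem_range.1 hi
      simp [ha2, show i < p + d by omega, show ¬ p ≤ i by omega]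
  have t1 : S1 - H1 = ∑ i ∈ Finset.Ico d n, a1 i • X i :=
    (Finset.sum_Ico_eq_sub _ hdn).symm
  have t2 : S2 - H2 = ∑ i ∈ Finset.Ico (p + d) n, a2 i • X i :=
    (Finset.sum_Ico_eq_sub _ hn).symm
  have t3 : S1 - H1 = S2 - H2 := by
    rw [t1, t2]
    symm
    refine Finset.sum_subset_zero_on_sdiff (Finset.Ico_subset_Ico_left (by omega)) ?_ ?_
    · intro i hi
      simp only [Finset.mem_sdiff, Finset.mem_Ico] at hi
      have : ¬ P i := fun hp => by have := hP i hp; omega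
      simp [ha1, this]
    · intro i hi
      simp only [Finset.mem_Ico] at hi
      simp [ha2, show ¬ i < p + d by omega]
  have e2 : ∑ i ∈ Finset.range n,
      a i • (if i < d then lam i • X (p + i) else if P i then X i else 0) = S2 := by
    have : S2 = H2 + ∑ i ∈ Finset.Ico d n, a1 i • X i := by
      rw [← t1, t3]; abel
    rw [this, eH2, ← Finset.sum_range_add_sum_Ico _ hdn]
    congr 1
    · refine Finset.sum_congr rfl fun i hi => ?_
      simp [Finset.mem_range.1 hi, mul_smul]
    · refine Finset.sum_congr rfl fun i hi => ?_
      simp only [Finset.mem_Ico] at hi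
      simp only [ha1, show ¬ i < d by omega, if_false]
      split_ifs <;> simp
  simp only
  rw [e1, e2]
  have b1 : ∀ i < d, |a i| * ‖X i‖ ≤ 2 * C * ‖S1‖ := by
    intro i hi
    have := h.coef a1 (hi.trans_le hdn)
    have e : a1 i = a i := by simp [ha1, hP' i hi]
    rwa [e] at this
  have b2 : ∀ i < d, |a i| * ‖X i‖ ≤ 2 * C * ‖S2‖ := by
    intro i hi
    have := h.coef a2 (show p + i < n by omega)
    have e : a2 (p + i) = a i * lam i := by simp [ha2, hi]
    rw [e, abs_mul, mul_assoc, hlam] at this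
    exact this
  have n1 : ‖H1‖ ≤ ∑ i ∈ Finset.range d, |a i| * ‖X i‖ := by
    refine (norm_sum_le _ _).trans (Finset.sum_le_sum fun i hi => ?_)
    rw [norm_smul]
    simp [ha1, hP' i (Finset.mem_range.1 hi)]
  have n2 : ‖H2‖ ≤ ∑ i ∈ Finset.range d, |a i| * ‖X i‖ := by
    rw [eH2]
    refine (norm_sum_le _ _).trans (Finset.sum_le_sum fun i hi => ?_)
    rw [norm_smul, Real.norm_eq_abs, abs_mul, mul_assoc, hlam]
  have s1 : ∑ i ∈ Finset.range d, |a i| * ‖X i‖ ≤ d * (2 * C * ‖S1‖) := by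
    have := Finset.sum_le_card_nsmul (Finset.range d) (fun i => |a i| * ‖X i‖) _
      fun i hi => b1 i (Finset.mem_range.1 hi)
    simpa using this
  have s2 : ∑ i ∈ Finset.range d, |a i| * ‖X i‖ ≤ d * (2 * C * ‖S2‖) := by
    have := Finset.sum_le_card_nsmul (Finset.range d) (fun i => |a i| * ‖X i‖) _
      fun i hi => b2 i (Finset.mem_range.1 hi)
    simpa using this
  have u1 := h.tail a1 hdn
  have u2 := h.tail a2 hn
  have v1 : ‖S1‖ ≤ ‖H1‖ + ‖S2 - H2‖ := by
    calc ‖S1‖ = ‖H1 + (S2 - H2)‖ := by rw [← t3]; congr 1; abel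
      _ ≤ _ := norm_add_le _ _
  have v2 : ‖S2‖ ≤ ‖H2‖ + ‖S1 - H1‖ := by
    calc ‖S2‖ = ‖H2 + (S1 - H1)‖ := by rw [t3]; congr 1; abel
      _ ≤ _ := norm_add_le _ _
  rw [one_div, inv_mul_le_iff₀ (by positivity)]
  constructor
  · nlinarith
  · nlinarith

variable {𝔽 : Subfield ℝ} (φ : (ℕ →₀ 𝔽) →ₗ[𝔽] 𝒲)

open Classical in
lemma RR_swap {x y : ℕ → (ℕ →₀ 𝔽)} {C : ℝ} (hC : 0 ≤ C) (h : BC (fun i => φ (x i)) C) {d p : ℕ}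
    (hlam : ∀ i j, ∃ l : 𝔽, |(l : ℝ)| * ‖φ (x j)‖ = ‖φ (x i)‖)
    {J₀ J₁ : Set ℕ} (hJ : ∀ j ∈ J₀, j < d ∨ (p + d ≤ j ∧ j ∈ J₁))
    (hJ₁ : ∀ j, p ≤ j → j < p + d → j ∈ J₁) {k c : ℝ} (hk : 0 < k)
    (hc : 1 + C + 2 * C * d ≤ c) {β : Ordinal.{0}}
    (hR : RR (TV φ y (Submodule.span 𝔽 (x '' J₀)) k) β []) :
    RR (TV φ y (Submodule.span 𝔽 (x '' J₁)) (c * k)) β [] := by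
  have hc0 : 0 < c := lt_of_lt_of_le (by positivity) hc
  have : ∀ i, ∃ l : 𝔽, |(l : ℝ)| * ‖φ (x (p + i))‖ = ‖φ (x i)‖ := fun i => hlam i (p + i)
  choose lam hl using this
  set P : ℕ → Prop := fun j => j < d ∨ (p + d ≤ j ∧ j ∈ J₁) with hP
  set S : ℕ → (ℕ →₀ 𝔽) := fun j => if P j then x j else 0 with hS
  set T : ℕ → (ℕ →₀ 𝔽) := fun j => if j < d then lam j • x (p + j) else
    if P j then x j else 0 with hT
  have hST : ∀ n, p + d ≤ n → SeqEquiv c n (fun i => φ (S i)) (fun i => φ (T i)) := by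
    intro n hn
    have := swap hC h hn (fun i => (lam i : ℝ)) hl P
      (fun j hj => hj.imp_right fun h => h.1) (fun j hj => Or.inl hj)
    refine seqEquiv_mono (by positivity) hc (seqEquiv_congr this ?_ ?_)
    · intro i _
      simp only [hS]
      split_ifs <;> simp
    · intro i _
      simp only [hT]
      split_ifs
      · rw [map_smul]; rfl
      · rfl
      · simp
  have hTm : ∀ j, T j ∈ Submodule.span 𝔽 (x '' J₁) := by
    intro j
    simp only [hT]
    split_ifs with h1 h2
    · exact Submodule.smul_mem _ _ (Submodule.subset_span ⟨_, hJ₁ _ (by omega) (by omega), rfl⟩)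
    · rcases h2 with h2 | h2
      · omega
      · exact Submodule.subset_span ⟨_, h2.2, rfl⟩
    · exact Submodule.zero_mem _
  refine RR.transfer (fun v w => ∀ᶠ n in atTop, Comb n S T v w) ?_ ?_ β [] [] .nil hR
  · intro l l' hll hl
    have hev : ∀ᶠ n in atTop, List.Forall₂ (Comb n S T) l l' := by
      clear hl
      induction hll with
      | nil => exact Eventually.of_forall fun _ => .nil
      | cons h1 _ ih => filter_upwards [h1, ih] with n h2 h3 using .cons h2 h3
    obtain ⟨n, hn, hn'⟩ := (hev.and (eventually_ge_atTop (p + d))).exists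
    refine ⟨?_, ?_⟩
    · intro v hv
      obtain ⟨i, hi, rfl⟩ := List.getElem_of_mem hv
      have h1 := comb_gd hn (hn.length_eq ▸ hi : i < l.length)
      have h2 := h1.right_mem _ (fun i _ => hTm i)
      simpa [gd, hi] using h2
    · rw [← hn.length_eq]
      have h1 := seqEquiv_comb φ (m := l.length) (hST n hn') fun i hi => comb_gd hn hi
      exact seqEquiv_trans hc0 hk (seqEquiv_symm hc0 h1) hl.2
  · intro l hl w hw
    have h1 : w ∈ Submodule.span 𝔽 (Set.range S) := by
      refine Submodule.span_mono ?_ (hl.1 w hw)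
      rintro _ ⟨j, hj, rfl⟩
      exact ⟨j, by simp [hS, show P j from hJ j hj]⟩
    obtain ⟨n, c', hc'⟩ := (eventually_span h1).exists
    exact ⟨∑ i ∈ Finset.range n, c' i • T i, (eventually_ge_atTop n).mono fun n' hn' =>
      Comb.mono ⟨c', hc', rfl⟩ hn' (fun _ _ => rfl) (fun _ _ => rfl)⟩

/-- Left end points of the intervals. -/
def aseq (st : ℕ → ℕ → ℕ) : ℕ → ℕ
  | 0 => 0
  | m + 1 => st (aseq st m) m + 1

lemma hyp_of_fail {x y : ℕ → (ℕ →₀ 𝔽)} {C : ℝ} (hC : 0 ≤ C) (h : BC (fun i => φ (x i)) C)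
    (hlam : ∀ i j, ∃ l : 𝔽, |(l : ℝ)| * ‖φ (x j)‖ = ‖φ (x i)‖) {α : Ordinal.{0}}
    (hfail : ∀ I : ℕ → Finset ℕ, IntervalSeq I → ∃ A : Set ℕ, A.Infinite ∧ ∃ k : ℕ, 1 ≤ k ∧
      RR (TV φ y (Submodule.span 𝔽 (x '' {j | ∀ m ∈ A, j ∉ I m})) k) (Ordinal.omega0 * α) []) :
    ∃ K : ℕ, 1 ≤ K ∧ Hyp φ x y α K := by
  by_contra! hno
  have : ∀ K : ℕ, ∃ (n₀ : ℕ) (g : ℕ → ℕ), 1 ≤ K → ∀ J : Set ℕ, (∀ j ∈ J, n₀ ≤ j) →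
      (∃ᶠ a in atTop, ∀ j ∈ J, j < a ∨ g a ≤ j) →
      ¬ RR (TV φ y (Submodule.span 𝔽 (x '' J)) K) (Ordinal.omega0 * α) [] := by
    intro K
    by_cases hK : 1 ≤ K
    · have := hno K hK
      unfold Hyp at this
      push Not at this
      obtain ⟨n₀, g, hg⟩ := this
      exact ⟨n₀, g, fun _ J h1 h2 => hg J h1 h2⟩
    · exact ⟨0, 0, fun h => absurd h hK⟩
  choose n₀ g hg using this
  set c : ℕ → ℕ := fun d => ⌈1 + C + 2 * C * d⌉₊ with hc
  set st : ℕ → ℕ → ℕ := fun a m => a + ∑ k ∈ Finset.range (m + 1), (n₀ (c a * k) + g k a) with hst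
  have hst1 : ∀ a m k, k ≤ m → a + n₀ (c a * k) + g k a ≤ st a m := by
    intro a m k hk
    have := Finset.single_le_sum (f := fun k => n₀ (c a * k) + g k a) (fun _ _ => Nat.zero_le _)
      (show k ∈ Finset.range (m + 1) from Finset.mem_range.2 (by omega))
    simp only [hst]
    omega
  have hst2 : ∀ a m, a ≤ st a m := fun a m => Nat.le_add_right _ _
  set a := aseq st with ha
  have hasucc : ∀ m, a (m + 1) = st (a m) m + 1 := fun m => rfl
  have hamono : StrictMono a := strictMono_nat_of_lt_succ fun m => by
    rw [hasucc]; have := hst2 (a m) m; omega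
  obtain ⟨A, hA, k, hk, hR⟩ := hfail (fun m => Finset.Icc (a m) (st (a m) m))
    ⟨fun m => ⟨_, _, hst2 _ _, rfl⟩, fun m i hi j hj => by
      simp only [Finset.mem_Icc, hasucc] at hi hj
      omega⟩
  obtain ⟨m₀, hm₀A, hm₀⟩ := hA.exists_gt k
  set d := a m₀ with hd
  set b := st d m₀ with hb
  have hc1 : 1 ≤ c d := by
    have h1 : (1:ℝ) ≤ c d := le_trans (by nlinarith [mul_nonneg hC (Nat.cast_nonneg (α := ℝ) d)])
      (Nat.le_ceil (1 + C + 2 * C * d))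
    exact_mod_cast h1
  set K' := c d * k with hK'
  have hK'1 : 1 ≤ K' := Nat.mul_pos hc1 hk
  set p := n₀ K' with hp
  have hpb : p + d ≤ b := by have := hst1 d m₀ k hm₀.le; rw [← hK', ← hp] at this; omega
  set J₁ : Set ℕ := {j | (p ≤ j ∧ j < p + d) ∨
    (b < j ∧ ∀ m ∈ A, j ∉ Finset.Icc (a m) (st (a m) m))} with hJ₁
  refine hg K' hK'1 J₁ ?_ ?_ ?_
  · rintro j (hj | hj)
    · exact hj.1
    · omega
  · rw [frequently_atTop]
    intro N
    obtain ⟨m, hmA, hm⟩ := hA.exists_gt (K' + N + m₀)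
    refine ⟨a m, le_trans (by omega) hamono.le_apply, ?_⟩
    have h1 : b < a m := by
      have h2 : a (m₀ + 1) ≤ a m := hamono.monotone (by omega)
      rw [hasucc] at h2
      exact h2
    have h3 := hst1 (a m) m K' (by omega)
    rintro j (hj | hj)
    · left; omega
    · have h4 := hj.2 m hmA
      rw [Finset.mem_Icc] at h4
      omega
  · have := RR_swap φ (d := d) (p := p) (J₁ := J₁) (c := (c d : ℝ)) (k := (k : ℝ)) hC h hlam ?_ ?_
      (by exact_mod_cast hk) (Nat.le_ceil _) hR
    · rw [hK']; push_cast; exact this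
    · intro j hj
      have h4 := hj m₀ hm₀A
      rw [Finset.mem_Icc, ← hd, ← hb] at h4
      by_cases hjd : j < d
      · exact Or.inl hjd
      · have h5 : b < j := by
          by_contra hcon
          exact h4 ⟨by omega, by omega⟩
        exact Or.inr ⟨by omega, Or.inr ⟨h5, hj⟩⟩
    · intro j h1 h2
      exact Or.inl ⟨h1, h2⟩

end Rosendal

namespace Rosendal

variable {𝒲 : Type} [NormedAddCommGroup 𝒲] [NormedSpace ℝ 𝒲]

lemma fspan_eq (ctx : Frame 𝒲) (S : Set 𝒲) :
    ctx.fspan S = (Submodule.span ctx.𝔽 S : Set 𝒲) := by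
  ext v
  constructor
  · rintro ⟨t, ht, c, hc, rfl⟩
    refine Submodule.sum_mem _ fun w hw => ?_
    exact Submodule.smul_mem _ (⟨c w, hc w⟩ : ctx.𝔽) (Submodule.subset_span (ht hw))
  · intro hv
    obtain ⟨f, t, ht, -, rfl⟩ := Submodule.mem_span_iff_exists_finset_subset.1 hv
    exact ⟨t, ht, fun w => (f w : ℝ), fun w => (f w).2, rfl⟩

/-- The coordinate map. -/
noncomputable def phi (ctx : Frame 𝒲) : (ℕ →₀ ctx.𝔽) →ₗ[ctx.𝔽] 𝒲 :=
  Finsupp.linearCombination ctx.𝔽 ctx.e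

lemma phi_sum (ctx : Frame 𝒲) (v : ℕ →₀ ctx.𝔽) (s : Finset ℕ) (hs : ∀ i ∉ s, v i = 0) :
    phi ctx v = ∑ i ∈ s, (v i : ℝ) • ctx.e i := by
  rw [phi, Finsupp.linearCombination_apply]
  exact Finsupp.sum_of_support_subset _ (fun i hi => by
    by_contra h
    exact (Finsupp.mem_support_iff.1 hi) (hs i h)) _ (fun _ _ => by simp)

lemma fspan_image (ctx : Frame 𝒲) (S : Set (ℕ →₀ ctx.𝔽)) :
    ctx.fspan (phi ctx '' S) = phi ctx '' (Submodule.span ctx.𝔽 S : Set (ℕ →₀ ctx.𝔽)) := by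
  rw [fspan_eq, Submodule.span_image, Submodule.map_coe]

lemma basis_indep {e : ℕ → 𝒲} (he : IsSchauderBasis e) {s : Finset ℕ} {a : ℕ → ℝ}
    (h : ∑ i ∈ s, a i • e i = 0) : ∀ i ∈ s, a i = 0 := by
  classical
  have h1 : Tendsto (fun N => ∑ i ∈ Finset.range N, (if i ∈ s then a i else 0) • e i) atTop
      (𝓝 0) := by
    refine tendsto_const_nhds.congr' ?_
    filter_upwards [eventually_gt_atTop (s.sup id)] with N hN
    rw [← h, ← Finset.sum_subset (s₁ := s) (s₂ := Finset.range N)]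
    · exact Finset.sum_congr rfl fun i hi => by simp [hi]
    · intro i hi
      exact Finset.mem_range.2 (lt_of_le_of_lt (Finset.le_sup (f := id) hi) hN)
    · intro i _ hi
      simp [hi]
  have h2 : (fun i => if i ∈ s then a i else 0) = (0 : ℕ → ℝ) := (he 0).unique h1 (by simp)
  intro i hi
  have := congrFun h2 i
  simpa [hi] using this

lemma phi_inj (ctx : Frame 𝒲) {v : ℕ →₀ ctx.𝔽} (h : phi ctx v = 0) : v = 0 := by
  rw [phi_sum ctx v v.support (fun i hi => Finsupp.notMem_support_iff.1 hi)] at h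
  have := basis_indep ctx.basis h
  ext i
  by_cases hi : i ∈ v.support
  · simpa using this i hi
  · simp [Finsupp.notMem_support_iff.1 hi]

lemma phi_supp (ctx : Frame 𝒲) {v : ℕ →₀ ctx.𝔽} {s : Finset ℕ}
    (h : SuppIn ctx.e (phi ctx v) s) : ∀ i ∉ s, v i = 0 := by
  classical
  obtain ⟨a, ha⟩ := h
  intro i hi
  rw [phi_sum ctx v (v.support ∪ s) (fun i hi => by
    simp only [Finset.mem_union, not_or] at hi
    exact Finsupp.notMem_support_iff.1 hi.1)] at ha
  have e1 : ∑ i ∈ s, a i • ctx.e i =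
      ∑ i ∈ v.support ∪ s, (if i ∈ s then a i else 0) • ctx.e i := by
    rw [← Finset.sum_subset (s₁ := s) Finset.subset_union_right]
    · exact Finset.sum_congr rfl fun i hi => by simp [hi]
    · intro i _ hi
      simp [hi]
  rw [e1, ← sub_eq_zero, ← Finset.sum_sub_distrib] at ha
  simp_rw [← sub_smul] at ha
  have h2 := basis_indep ctx.basis ha
  by_cases hv : i ∈ v.support
  · have := h2 i (by simp [hv])
    simpa [hi] using this
  · exact Finsupp.notMem_support_iff.1 hv

lemma SuppIn.trans {e b : ℕ → 𝒲} {D' : ℕ → Finset ℕ} (hb : ∀ i, SuppIn e (b i) (D' i))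
    {v : 𝒲} {D : Finset ℕ} (hv : SuppIn b v D) : SuppIn e v (D.biUnion D') := by
  classical
  choose c hc using hb
  obtain ⟨a, rfl⟩ := hv
  refine ⟨fun l => ∑ i ∈ D, a i * (if l ∈ D' i then c i l else 0), ?_⟩
  simp_rw [Finset.sum_smul]
  rw [Finset.sum_comm]
  refine Finset.sum_congr rfl fun i hi => ?_
  rw [hc i, Finset.smul_sum]
  rw [← Finset.sum_subset (s₁ := D' i) (Finset.subset_biUnion_of_mem D' hi)]
  · exact Finset.sum_congr rfl fun l hl => by simp [hl, mul_smul]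
  · intro l _ hl
    simp [hl]

section
variable (ctx : Frame 𝒲) {x : ℕ → (ℕ →₀ ctx.𝔽)} {m : ℕ → ℕ}

lemma blk_supp (hx : Blk x m) (n : ℕ) :
    SuppIn ctx.e (phi ctx (x n)) (Finset.Ico (m n) (m (n + 1))) := by
  refine ⟨fun i => x n i, phi_sum ctx _ _ fun i hi => ?_⟩
  obtain ⟨-, h2, h3⟩ := hx.2 n
  rw [Finset.mem_Ico, not_and, not_lt] at hi
  by_cases h : m n ≤ i
  · exact h3 i (hi h)
  · exact h2 i (not_le.1 h)

lemma W_eq : ctx.W = Set.range (phi ctx) := by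
  unfold Frame.W
  rw [fspan_eq, ← Finsupp.range_linearCombination]
  rfl

lemma blk_isBlockSeq (hx : Blk x m) : ctx.IsBlockSeq (fun n => phi ctx (x n)) := by
  refine ⟨fun n => ?_, fun n h => (hx.2 n).1 (phi_inj ctx h), _, blk_supp ctx hx, ?_⟩
  · change _ ∈ ctx.W
    rw [W_eq]; exact ⟨_, rfl⟩
  · intro n i hi j hj
    simp only [Finset.mem_Ico] at hi hj
    omega

lemma blk_BC (hx : Blk x m) : ∃ C, 0 ≤ C ∧ BC (fun i => phi ctx (x i)) C := by
  have := ctx.complete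
  obtain ⟨C, hC, h⟩ := basis_const ctx.basis
  refine ⟨C, hC, fun a n N hn => ?_⟩
  set b : ℕ → ℝ := fun i => ∑ j ∈ Finset.range N, a j * (x j i : ℝ) with hb
  have e : ∀ d ≤ N, ∑ j ∈ Finset.range d, a j • phi ctx (x j) =
      ∑ i ∈ Finset.range (m d), b i • ctx.e i := by
    intro d hd
    have e1 : ∀ i ∈ Finset.range (m d), b i • ctx.e i =
        ∑ j ∈ Finset.range d, a j • ((x j i : ℝ) • ctx.e i) := by
      intro i hi
      simp only [hb]
      rw [← Finset.sum_subset (Finset.range_mono hd), Finset.sum_smul]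
      · simp_rw [mul_smul]
      · intro j _ hj
        have hdj : d ≤ j := by simpa using hj
        have : x j i = 0 := (hx.2 j).2.1 i
          (lt_of_lt_of_le (Finset.mem_range.1 hi) (hx.1.monotone hdj))
        simp [this]
    rw [Finset.sum_congr rfl e1, Finset.sum_comm]
    refine Finset.sum_congr rfl fun j hj => ?_
    rw [← Finset.smul_sum, ← phi_sum]
    intro i hi
    refine (hx.2 j).2.2 i (le_trans (hx.1.monotone ?_) (by simpa using hi))
    exact Finset.mem_range.1 hj
  have := h b (m n) (m N) (hx.1.monotone hn)
  rwa [← e n hn, ← e N le_rfl] at this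

lemma phi_norm_mem (v : ℕ →₀ ctx.𝔽) : ‖phi ctx v‖ ∈ ctx.𝔽 := by
  rw [phi_sum ctx v v.support (fun i hi => Finsupp.notMem_support_iff.1 hi)]
  exact ctx.norm_mem _ _ fun i _ => (v i).2

lemma blk_lam (hx : Blk x m) (i j : ℕ) :
    ∃ l : ctx.𝔽, |(l : ℝ)| * ‖phi ctx (x j)‖ = ‖phi ctx (x i)‖ := by
  have hj : ‖phi ctx (x j)‖ ≠ 0 := by
    rw [norm_ne_zero_iff]
    exact fun h => (hx.2 j).1 (phi_inj ctx h)
  refine ⟨⟨‖phi ctx (x i)‖ / ‖phi ctx (x j)‖,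
    ctx.𝔽.div_mem (phi_norm_mem ctx _) (phi_norm_mem ctx _)⟩, ?_⟩
  simp only
  rw [abs_of_nonneg (by positivity), div_mul_cancel₀ _ hj]

lemma rel_block (hx : Blk x m) {y : ℕ → (ℕ →₀ ctx.𝔽)}
    (hy : ctx.BlockSeqRel (fun n => phi ctx (x n)) (fun n => phi ctx (y n))) :
    ctx.IsBlockSeq (fun n => phi ctx (y n)) ∧ Big (Submodule.span ctx.𝔽 (Set.range y)) := by
  obtain ⟨-, hy0, D, hD, hlt⟩ := hy
  set E : ℕ → Finset ℕ := fun n => (D n).biUnion fun i => Finset.Ico (m i) (m (i + 1)) with hE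
  have hsupp : ∀ n, SuppIn ctx.e (phi ctx (y n)) (E n) := fun n =>
    SuppIn.trans (blk_supp ctx hx) (hD n)
  have hElt : ∀ n, ∀ i ∈ E n, ∀ j ∈ E (n + 1), i < j := by
    intro n i hi j hj
    simp only [hE, Finset.mem_biUnion, Finset.mem_Ico] at hi hj
    obtain ⟨p, hp, hp1, hp2⟩ := hi
    obtain ⟨q, hq, hq1, hq2⟩ := hj
    have := hx.1.monotone (show p + 1 ≤ q from hlt n p hp q hq)
    omega
  refine ⟨⟨fun n => ?_, hy0, E, hsupp, hElt⟩, fun n => ?_⟩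
  · change _ ∈ ctx.W
    rw [W_eq]; exact ⟨_, rfl⟩
  have hne : ∀ n, (E n).Nonempty := by
    intro n
    rw [Finset.nonempty_iff_ne_empty]
    intro h
    obtain ⟨a, ha⟩ := hsupp n
    rw [h] at ha
    exact hy0 n (by simpa using ha)
  have hge : ∀ n, ∀ i ∈ E n, n ≤ i := by
    intro n
    induction n with
    | zero => intro i _; exact Nat.zero_le _
    | succ n ih =>
      intro j hj
      obtain ⟨i, hi⟩ := hne n
      have := ih i hi
      have := hElt n i hi j hj
      omega
  refine ⟨y n, Submodule.subset_span ⟨n, rfl⟩, ?_, ?_⟩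
  · intro i hi
    exact phi_supp ctx (hsupp n) i fun h => by have := hge n i h; omega
  · intro h
    exact hy0 n (by simp [h])

lemma big_of_infDim {Y : Set 𝒲} (hY : ctx.IsSubspace Y) {V : Submodule ctx.𝔽 (ℕ →₀ ctx.𝔽)}
    (hYV : Y ⊆ phi ctx '' (V : Set (ℕ →₀ ctx.𝔽))) (hinf : ctx.IsInfDim Y) :
    ∃ Y' : Submodule ctx.𝔽 (ℕ →₀ ctx.𝔽), Big Y' ∧ Y' ≤ V ∧ Y = phi ctx '' Y' := by
  let Y₀ : Submodule ctx.𝔽 (ℕ →₀ ctx.𝔽) :=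
    { carrier := {v | phi ctx v ∈ Y}
      zero_mem' := by simpa using hY.1
      add_mem' := fun {a b} ha hb => by
        have := hY.2.1 _ _ ha hb
        simpa using this
      smul_mem' := fun c v hv => by
        have := hY.2.2 (c : ℝ) c.2 _ hv
        change phi ctx (c • v) ∈ Y
        rw [map_smul]
        exact this }
  have hY₀ : ∀ v, v ∈ Y₀ ↔ phi ctx v ∈ Y := fun _ => Iff.rfl
  have himg : Y = phi ctx '' ((Y₀ ⊓ V : Submodule ctx.𝔽 (ℕ →₀ ctx.𝔽)) : Set (ℕ →₀ ctx.𝔽)) := by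
    ext w
    constructor
    · intro hw
      obtain ⟨v, hv, rfl⟩ := hYV hw
      exact ⟨v, ⟨hw, hv⟩, rfl⟩
    · rintro ⟨v, hv, rfl⟩
      exact hv.1
  refine ⟨Y₀ ⊓ V, fun n => ?_, inf_le_right, himg⟩
  by_contra! hno
  apply hinf
  let r : (Y₀ ⊓ V : Submodule ctx.𝔽 (ℕ →₀ ctx.𝔽)) →ₗ[ctx.𝔽] (Fin n → ctx.𝔽) :=
    (LinearMap.pi fun i : Fin n => Finsupp.lapply (i : ℕ)) ∘ₗ Submodule.subtype _
  have hr : Function.Injective r := by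
    rw [injective_iff_map_eq_zero]
    intro v hv
    apply Subtype.ext
    refine hno v.1 v.2 fun i hi => ?_
    exact congrFun hv ⟨i, hi⟩
  have hfd : Module.Finite ctx.𝔽 (Y₀ ⊓ V : Submodule ctx.𝔽 (ℕ →₀ ctx.𝔽)) :=
    Module.Finite.of_injective r hr
  have hfg : (Y₀ ⊓ V).FG := Module.Finite.iff_fg.1 hfd
  obtain ⟨t, ht⟩ := hfg
  classical
  refine ⟨t.image (phi ctx), ?_⟩
  rw [Finset.coe_image, fspan_image, ht, ← himg]

end

lemma countable_Iic {α : Ordinal.{0}} (hα : α < (Cardinal.aleph 1).ord) :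
    (Set.Iic α).Countable := by
  have h1 : α.card < Cardinal.aleph 1 := Cardinal.lt_ord.1 hα
  have h2 : α.card ≤ Cardinal.aleph0 := by
    rw [← Order.lt_succ_iff, Cardinal.succ_aleph0]
    exact h1
  have h3 : (Set.Iio α).Countable := by
    rw [← Cardinal.le_aleph0_iff_set_countable, Cardinal.mk_Iio_ordinal]
    rw [Cardinal.lift_le_aleph0]
    exact h2
  rw [← Set.Iio_insert]
  exact h3.insert _

/-- For every countable ordinal `α` there is a block subspace
`X = [x n] ⊆ W` such that either (1) every normalised block sequence `(y n)` in `X`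
admits successive finite intervals `I 0 < I 1 < …` with
`Emb((y n), [x j : j ∉ ⋃_{m ∈ A} I m]) ≤ ω·α` for every infinite `A ⊆ ℕ`, or (2) for
every infinite-dimensional subspace `Y ⊆ X` and every block sequence `(z n)` in `X`,
`Emb((z n), Y) > α`. -/
theorem main_dichotomy
    (𝒲 : Type) [NormedAddCommGroup 𝒲] [NormedSpace ℝ 𝒲] (ctx : Frame 𝒲)
    (α : Ordinal) (hα : α < (Cardinal.aleph 1).ord) :
    ∃ x : ℕ → 𝒲, ctx.IsBlockSeq x ∧
      ((∀ y : ℕ → 𝒲, ctx.BlockSeqRel x y → (∀ n, ‖y n‖ = 1) →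
          ∃ I : ℕ → Finset ℕ, IntervalSeq I ∧
            ∀ A : Set ℕ, A.Infinite →
              embIndex y (ctx.fspan {v | ∃ j : ℕ, (∀ m ∈ A, j ∉ I m) ∧ v = x j})
                ≤ ((Ordinal.omega0 * α : Ordinal) : WithTop Ordinal)) ∨
       (∀ Y : Set 𝒲, ctx.IsSubspace Y → Y ⊆ ctx.fspan (Set.range x) → ctx.IsInfDim Y →
          ∀ z : ℕ → 𝒲, ctx.IsBlockSeq z → (∀ n, z n ∈ ctx.fspan (Set.range x)) →
            (α : WithTop Ordinal) < embIndex z Y)) := by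
  have hcα := countable_Iic hα
  have : Countable ctx.𝔽 := ctx.countable.to_subtype
  set φ := phi ctx with hφ
  obtain ⟨x, m, hx, hdec⟩ := exists_decided (k := ctx.𝔽) hcα (fun K : ℕ => EE φ (K : ℝ))
  have hrange : ∀ u : ℕ → (ℕ →₀ ctx.𝔽), ctx.fspan (Set.range fun n => φ (u n)) =
      φ '' (Submodule.span ctx.𝔽 (Set.range u) : Set (ℕ →₀ ctx.𝔽)) := by
    intro u
    rw [← fspan_image, ← Set.range_comp]; rfl
  by_cases h1 : ∀ y : ℕ → 𝒲, ctx.BlockSeqRel (fun n => φ (x n)) y → (∀ n, ‖y n‖ = 1) →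
          ∃ I : ℕ → Finset ℕ, IntervalSeq I ∧
            ∀ A : Set ℕ, A.Infinite →
              embIndex y (ctx.fspan {v | ∃ j : ℕ, (∀ m ∈ A, j ∉ I m) ∧ v = φ (x j)})
                ≤ ((Ordinal.omega0 * α : Ordinal) : WithTop Ordinal)
  · exact ⟨fun n => φ (x n), blk_isBlockSeq ctx hx, Or.inl h1⟩
  push Not at h1
  obtain ⟨y, hy, -, hfail⟩ := h1
  have hyx := hy.1
  rw [hrange] at hyx
  choose y' hy' hyy using hyx
  obtain rfl : y = fun n => φ (y' n) := funext fun n => (hyy n).symm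
  obtain ⟨hyblk, hybig⟩ := rel_block ctx hx hy
  obtain ⟨C, hC, hBC⟩ := blk_BC ctx hx
  obtain ⟨K, hK, hHyp⟩ := hyp_of_fail φ (x := x) (y := y') (α := α) hC hBC (blk_lam ctx hx) (by
    intro I hI
    obtain ⟨A, hA, hemb⟩ := hfail I hI
    have hset : {v | ∃ j : ℕ, (∀ m ∈ A, j ∉ I m) ∧ v = φ (x j)} =
        φ '' (x '' {j | ∀ m ∈ A, j ∉ I m}) := by
      ext v
      constructor
      · rintro ⟨j, hj, rfl⟩
        exact ⟨_, ⟨j, hj, rfl⟩, rfl⟩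
      · rintro ⟨_, ⟨j, hj, rfl⟩, rfl⟩
        exact ⟨j, hj, rfl⟩
    rw [hset, fspan_image, lt_embIndex_iff] at hemb
    obtain ⟨K, hK, hR⟩ := hemb
    refine ⟨A, hA, ⌈K⌉₊, Nat.one_le_ceil_iff.2 (by linarith), ?_⟩
    exact RR_embTree_to_TV φ (by linarith) (Nat.le_ceil K) hR)
  have hK1 : (1 : ℝ) ≤ K := by exact_mod_cast hK
  have hK0 : (0 : ℝ) < K := by linarith
  have hyX : Submodule.span ctx.𝔽 (Set.range y') ≤ Submodule.span ctx.𝔽 (Set.range x) := by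
    rw [Submodule.span_le]
    rintro _ ⟨n, rfl⟩
    exact hy' n
  have hG := (hdec K).resolve_right (not_BB hx hcα hK0 hybig hyX hHyp)
  refine ⟨fun n => φ (y' n), hyblk, Or.inr ?_⟩
  intro Y hY hYy hinf z _ hz
  rw [hrange] at hYy hz
  obtain ⟨Y', hbig, hle, rfl⟩ := big_of_infDim ctx hY hYy hinf
  choose z' hz' hzz using hz
  obtain rfl : z = fun n => φ (z' n) := funext fun n => (hzz n).symm
  have hR := RR_of_GG hx hcα hK0 hHyp hG hbig (hle.trans hyX) hz'
  rw [lt_embIndex_iff]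
  exact ⟨K * K, by nlinarith, RR_TV_to_embTree φ hR⟩

end Rosendal
end
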